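/- arXiv:2212.01500 — 3 statements merged into one kernel-verified Lean document; each statement's English description precedes it below -/
import Mathlib

section
/- Let n ≥ 2 and let y_1, …, y_n be nonzero real numbers with |y_i| < |y_{i+1}| for i = 1, …, n−1. Let p be the number of indices i with y_i > 0 and m = n − p the number of indices with y_i < 0. Then ∏_{1 ≤ i < j ≤ n} (1 − y_i/y_j) ≤ 2^{min(p, m)}. -/
open Finset

lemma aux1 {α : Type} (f g : α → ℝ) (σ : α → ℤ) : ∀ (l : List α) (h : ℕ) (W : ℝ),
    (∀ b ∈ l, (σ b = 1 ∧ 0 ≤ f b) ∨ (σ b = -1 ∧ f b ≤ 0)) →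
    (∀ b ∈ l, 0 ≤ g b ∧ g b ≤ 1 - f b) →
    l.Pairwise (fun b b' => |f b'| ≤ |f b|) → (∀ b ∈ l, |f b| ≤ W) → W ≤ 1 → 0 ≤ W →
    (∀ p, p <+: l → 0 ≤ (h : ℤ) + (p.map σ).sum) →
    (1 - W) ^ h * (l.map g).prod ≤ 1 := by
  intro l
  induction l with
  | nil =>
    intro h W _ _ _ _ h1 h0 _
    simp
    exact pow_le_one₀ (by linarith) (by linarith)
  | cons b l ih =>
    intro h W hσ hg hp hW h1 h0 hG
    have hb := hσ b (by simp)
    have hgb := hg b (by simp)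
    have hWb := hW b (by simp)
    rw [List.pairwise_cons] at hp
    have hσ' : ∀ c ∈ l, (σ c = 1 ∧ 0 ≤ f c) ∨ (σ c = -1 ∧ f c ≤ 0) :=
      fun c hc => hσ c (by simp [hc])
    have hg' : ∀ c ∈ l, 0 ≤ g c ∧ g c ≤ 1 - f c := fun c hc => hg c (by simp [hc])
    have hr : 0 ≤ (l.map g).prod := by
      apply List.prod_nonneg
      intro a ha
      obtain ⟨c, hc, rfl⟩ := List.mem_map.1 ha
      exact (hg' c hc).1
    have hw0 : 0 ≤ |f b| := abs_nonneg _
    have hpow : (1 - W) ^ h ≤ (1 - |f b|) ^ h :=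
      pow_le_pow_left₀ (by linarith) (by linarith) _
    have hG' : ∀ p, p <+: l → 0 ≤ (h : ℤ) + σ b + (p.map σ).sum := by
      intro p hpl
      have := hG (b :: p) (by simpa using hpl)
      simp at this
      linarith
    rw [List.map_cons, List.prod_cons]
    rcases hb with ⟨s, fb⟩ | ⟨s, fb⟩
    · have := ih (h + 1) |f b| hσ' hg' hp.2 hp.1 (by linarith) hw0 (by
        intro p hpl; have := hG' p hpl; rw [s] at this; push_cast; linarith)
      refine le_trans ?_ this
      rw [← mul_assoc]
      refine mul_le_mul_of_nonneg_right ?_ hr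
      rw [pow_succ]
      refine mul_le_mul hpow ?_ hgb.1 (by apply pow_nonneg; linarith)
      rw [abs_of_nonneg fb]; exact hgb.2
    · have h0' := hG' [] (by simp)
      rw [s] at h0'
      simp at h0'
      obtain ⟨k, rfl⟩ : ∃ k, h = k + 1 := ⟨h - 1, by omega⟩
      have := ih k |f b| hσ' hg' hp.2 hp.1 (by linarith) hw0 (by
        intro p hpl; have := hG' p hpl; rw [s] at this; push_cast at this; linarith)
      refine le_trans ?_ this
      rw [← mul_assoc]
      refine mul_le_mul_of_nonneg_right ?_ hr
      calc (1 - W) ^ (k + 1) * g b ≤ (1 - |f b|) ^ (k + 1) * (1 + |f b|) := by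
            refine mul_le_mul hpow ?_ hgb.1 (by apply pow_nonneg; linarith)
            rw [abs_of_nonpos fb]; linarith [hgb.2]
        _ = (1 - |f b|) ^ k * (1 - |f b| ^ 2) := by ring
        _ ≤ (1 - |f b|) ^ k * 1 := by
            refine mul_le_mul_of_nonneg_left ?_ (by apply pow_nonneg; linarith)
            nlinarith
        _ = _ := by ring

lemma aux2 {α : Type} (f g : α → ℝ) (σ : α → ℤ) (C : ℝ) (hC : 1 ≤ C) :
    ∀ (l : List α) (h : ℕ) (W : ℝ),
    (∀ b ∈ l, (σ b = 1 ∧ 0 ≤ f b) ∨ (σ b = -1 ∧ f b ≤ 0)) →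
    (∀ b ∈ l, 0 ≤ g b ∧ g b ≤ 1 - f b) →
    (∀ b ∈ l, σ b = -1 → g b ≤ C) →
    l.Pairwise (fun b b' => |f b'| ≤ |f b|) → (∀ b ∈ l, |f b| ≤ W) → W ≤ 1 → 0 ≤ W →
    (∀ p, p <+: l → 0 ≤ (h : ℤ) + 1 + (p.map σ).sum) →
    (1 - W) ^ h * (l.map g).prod ≤ C := by
  intro l
  induction l with
  | nil =>
    intro h W _ _ _ _ _ h1 h0 _
    simp
    exact (pow_le_one₀ (by linarith) (by linarith)).trans hC
  | cons b l ih =>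
    intro h W hσ hg hgC hp hW h1 h0 hG
    have hb := hσ b (by simp)
    have hgb := hg b (by simp)
    have hWb := hW b (by simp)
    rw [List.pairwise_cons] at hp
    have hσ' : ∀ c ∈ l, (σ c = 1 ∧ 0 ≤ f c) ∨ (σ c = -1 ∧ f c ≤ 0) :=
      fun c hc => hσ c (by simp [hc])
    have hg' : ∀ c ∈ l, 0 ≤ g c ∧ g c ≤ 1 - f c := fun c hc => hg c (by simp [hc])
    have hgC' : ∀ c ∈ l, σ c = -1 → g c ≤ C := fun c hc => hgC c (by simp [hc])
    have hr : 0 ≤ (l.map g).prod := by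
      apply List.prod_nonneg
      intro a ha
      obtain ⟨c, hc, rfl⟩ := List.mem_map.1 ha
      exact (hg' c hc).1
    have hw0 : 0 ≤ |f b| := abs_nonneg _
    have hpow : (1 - W) ^ h ≤ (1 - |f b|) ^ h :=
      pow_le_pow_left₀ (by linarith) (by linarith) _
    have hG' : ∀ p, p <+: l → 0 ≤ (h : ℤ) + 1 + σ b + (p.map σ).sum := by
      intro p hpl
      have := hG (b :: p) (by simpa using hpl)
      simp at this
      linarith
    rw [List.map_cons, List.prod_cons]
    rcases hb with ⟨s, fb⟩ | ⟨s, fb⟩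
    · have := ih (h + 1) |f b| hσ' hg' hgC' hp.2 hp.1 (by linarith) hw0 (by
        intro p hpl; have := hG' p hpl; rw [s] at this; push_cast; linarith)
      refine le_trans ?_ this
      rw [← mul_assoc]
      refine mul_le_mul_of_nonneg_right ?_ hr
      rw [pow_succ]
      refine mul_le_mul hpow ?_ hgb.1 (by apply pow_nonneg; linarith)
      rw [abs_of_nonneg fb]; exact hgb.2
    · rcases h with _ | k
      · have := aux1 f g σ l 0 |f b| hσ' hg' hp.2 hp.1 (by linarith) hw0 (by
          intro p hpl; have := hG' p hpl; rw [s] at this; push_cast at this ⊢; linarith)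
        simp only [pow_zero, one_mul] at this ⊢
        have h2 := hgC b (by simp) s
        calc g b * (l.map g).prod ≤ C * 1 := mul_le_mul h2 this hr (by linarith)
          _ = C := by ring
      have := ih k |f b| hσ' hg' hgC' hp.2 hp.1 (by linarith) hw0 (by
        intro p hpl; have := hG' p hpl; rw [s] at this; push_cast at this; linarith)
      refine le_trans ?_ this
      rw [← mul_assoc]
      refine mul_le_mul_of_nonneg_right ?_ hr
      calc (1 - W) ^ (k + 1) * g b ≤ (1 - |f b|) ^ (k + 1) * (1 + |f b|) := by
            refine mul_le_mul hpow ?_ hgb.1 (by apply pow_nonneg; linarith)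
            rw [abs_of_nonpos fb]; linarith [hgb.2]
        _ = (1 - |f b|) ^ k * (1 - |f b| ^ 2) := by ring
        _ ≤ (1 - |f b|) ^ k * 1 := by
            refine mul_le_mul_of_nonneg_left ?_ (by apply pow_nonneg; linarith)
            nlinarith
        _ = _ := by ring

noncomputable def sg (x : ℝ) : ℤ := if 0 < x then 1 else -1

noncomputable def FF : List ℝ → ℝ
  | [] => 1
  | a :: l => (l.map (fun b => 1 - a / b)).prod * FF l

lemma FF_append (L M : List ℝ) :
    FF (L ++ M) = FF L * FF M * (M.map (fun b => (L.map (fun i => 1 - i / b)).prod)).prod := by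
  induction L with
  | nil => simp [FF]
  | cons a L ih =>
    simp only [List.cons_append, FF, ih, List.map_append, List.prod_append, List.map_cons,
      List.prod_cons, List.prod_map_mul]
    ring

lemma FF_snoc (L : List ℝ) (a : ℝ) :
    FF (L ++ [a]) = FF L * (L.map (fun i => 1 - i / a)).prod := by
  rw [FF_append]; simp [FF]

lemma FF_pair (L R : List ℝ) (a a' : ℝ) :
    FF (L ++ a :: a' :: R) = FF (L ++ R) * ((1 - a / a') *
      (R.map (fun b => (1 - a / b) * (1 - a' / b))).prod) *
      (L.map (fun i => (1 - i / a) * (1 - i / a'))).prod := by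
  rw [FF_append, FF_append]
  simp only [FF, List.map_cons, List.prod_cons, List.prod_map_mul]
  ring

lemma FF_neg (l : List ℝ) : FF (l.map (fun x => -x)) = FF l := by
  induction l with
  | nil => rfl
  | cons a l ih => simp [FF, ih, List.map_map, Function.comp_def]

lemma exists_split (l : List ℝ) : ∃ L R, l = L ++ R ∧
    (∀ p, p <+: R → (p.map sg).sum ≤ 0) ∧
    (∀ q, q <:+ L → q ≠ [] → 0 < (q.map sg).sum) := by
  obtain ⟨k, hk, hmax⟩ := Finset.exists_max_image (Finset.range (l.length + 1))
    (fun k => ((l.length : ℤ) + 1) * ((l.take k).map sg).sum - k) ⟨0, by simp⟩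
  have hk' : k ≤ l.length := by simpa [Nat.lt_succ_iff] using hk
  have key : ∀ A B, l = A ++ B → ((l.length : ℤ) + 1) * (A.map sg).sum - A.length ≤
      ((l.length : ℤ) + 1) * ((l.take k).map sg).sum - k := by
    intro A B h
    have h2 := hmax A.length (by simp [h])
    have h3 : l.take A.length = A := by rw [h]; simp
    simp only [h3] at h2
    exact h2
  refine ⟨l.take k, l.drop k, by simp, ?_, ?_⟩
  · rintro p ⟨t, ht⟩
    have h1 : l = (l.take k ++ p) ++ t := by rw [List.append_assoc, ht]; simp
    have h2 := key _ _ h1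
    have h3 : (l.take k ++ p).length ≤ l.length := by
      conv_rhs => rw [h1]
      simp
    rw [List.map_append, List.sum_append] at h2
    by_contra hc
    push Not at hc
    nlinarith
  · rintro q ⟨t, ht⟩ hq
    have h1 : l = t ++ (q ++ l.drop k) := by rw [← List.append_assoc, ht]; simp
    have h2 := key _ _ h1
    have h4 : t.length + q.length = k := by
      have := congrArg List.length ht
      simp at this; omega
    have h5 : 0 < q.length := List.length_pos_iff.2 hq
    rw [← ht, List.map_append, List.sum_append] at h2
    by_contra hc
    push Not at hc
    nlinarith

lemma fac_nonneg {i a : ℝ} (ha : a ≠ 0) (h : |i| < |a|) : 0 ≤ 1 - i / a := by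
  have : |i / a| ≤ 1 := by
    rw [abs_div, div_le_one (abs_pos.2 ha)]; exact h.le
  linarith [le_abs_self (i / a)]

lemma left_bound (L : List ℝ) (hne : ∀ i ∈ L, i ≠ 0) (hp : L.Pairwise (fun a b => |a| < |b|))
    (hs : ∀ q, q <:+ L → 0 ≤ (q.map sg).sum) (c : ℝ) (hc : 0 < c) (hL : ∀ i ∈ L, |i| * c ≤ 1)
    (g : ℝ → ℝ) (hg : ∀ i ∈ L, 0 ≤ g i ∧ g i ≤ 1 - i * c) : (L.map g).prod ≤ 1 := by
  have := aux1 (fun i => i * c) g sg L.reverse 0 1 ?_ ?_ ?_ ?_ le_rfl zero_le_one ?_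
  · simpa [List.map_reverse, List.prod_reverse] using this
  · intro b hb
    rw [List.mem_reverse] at hb
    unfold sg
    rcases lt_or_gt_of_ne (hne b hb) with h | h
    · right; rw [if_neg (by linarith)]; exact ⟨rfl, by nlinarith⟩
    · left; rw [if_pos h]; exact ⟨rfl, by positivity⟩
  · intro b hb
    exact hg b (by simpa using hb)
  · rw [List.pairwise_reverse]
    refine hp.imp ?_
    intro a b hab
    simp only [abs_mul]
    exact mul_le_mul_of_nonneg_right hab.le (abs_nonneg _)
  · intro b hb
    rw [abs_mul, abs_of_pos hc]
    exact hL b (by simpa using hb)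
  · intro p hpl
    have h1 : p.reverse <:+ L := by
      rw [← List.reverse_prefix]; simpa using hpl
    have := hs _ h1
    simpa [List.map_reverse, List.sum_reverse] using this

lemma right_bound (R : List ℝ) (a a' : ℝ) (ha : 0 < a) (ha' : a' < 0) (haa : |a| < |a'|)
    (hne : ∀ i ∈ R, i ≠ 0) (hp : R.Pairwise (fun a b => |a| < |b|))
    (hR : ∀ b ∈ R, |a'| < |b|)
    (hs : ∀ q, q <+: R → (q.map sg).sum ≤ 1) :
    (1 - a / a') * (R.map (fun b => (1 - a / b) * (1 - a' / b))).prod ≤ 2 := by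
  have hu : ∃ u, u = -a / a' := ⟨_, rfl⟩
  obtain ⟨u, hu⟩ := hu
  rw [abs_of_pos ha, abs_of_neg ha'] at haa
  have hu0 : 0 ≤ u := by rw [hu]; exact div_nonneg_of_nonpos (by linarith) ha'.le
  have hu1 : u ≤ 1 := by rw [hu, div_le_one_of_neg ha']; linarith
  have hua : a = -(u * a') := by rw [hu, div_mul_cancel₀ _ ha'.ne]; ring
  have h1u : 1 - a / a' = 1 + u := by rw [hu]; ring
  rw [h1u]
  have hlen : ∀ q : List ℝ, (q.map (fun x => - sg x)).sum = - (q.map sg).sum := by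
    intro q
    induction q with
    | nil => simp
    | cons x q ih => simp [ih]; ring
  have := aux2 (fun b => (a + a') / b) (fun b => (1 - a / b) * (1 - a' / b)) (fun x => - sg x)
    (2 / (1 + u)) (by rw [le_div_iff₀ (by linarith)]; linarith) R 0 1 ?_ ?_ ?_ ?_ ?_ le_rfl
    zero_le_one ?_
  · simp only [pow_zero, one_mul] at this
    rw [le_div_iff₀ (by linarith)] at this
    linarith
  · intro b hb
    unfold sg
    rcases lt_or_gt_of_ne (hne b hb) with h | h
    · left; rw [if_neg (by linarith)]
      exact ⟨by norm_num, div_nonneg_of_nonpos (by linarith) h.le⟩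
    · right; rw [if_pos h]
      exact ⟨by norm_num, div_nonpos_of_nonpos_of_nonneg (by linarith) h.le⟩
  · intro b hb
    have hb0 := hne b hb
    have h1 := hR b hb
    refine ⟨mul_nonneg (fac_nonneg hb0 ?_) (fac_nonneg hb0 h1), ?_⟩
    · rw [abs_of_pos ha]; rw [abs_of_neg ha'] at h1; linarith
    · have : (1 - a / b) * (1 - a' / b) = 1 - (a + a') / b + a * a' / b ^ 2 := by
        field_simp; ring
      rw [this]
      have : a * a' / b ^ 2 ≤ 0 :=
        div_nonpos_of_nonpos_of_nonneg (by nlinarith) (by positivity)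
      linarith
  · intro b hb hsb
    have hbpos : 0 < b := by
      by_contra h
      simp [sg, h] at hsb
    have h1 := hR b hb
    rw [abs_of_neg ha', abs_of_pos hbpos] at h1
    obtain ⟨w, hw⟩ : ∃ w, w = -a' / b := ⟨_, rfl⟩
    have hw0 : 0 ≤ w := by rw [hw]; exact div_nonneg (by linarith) hbpos.le
    have hw1 : w ≤ 1 := by rw [hw, div_le_one hbpos]; linarith
    have e1 : a' / b = -w := by rw [hw]; ring
    have e2 : a / b = u * w := by rw [hua, hw]; ring
    show (1 - a / b) * (1 - a' / b) ≤ _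
    rw [le_div_iff₀ (by linarith), e1, e2]
    have k1 : 0 ≤ (1 - u) * (1 - w) := mul_nonneg (by linarith) (by linarith)
    have k2 : 0 ≤ 1 - u * w := by nlinarith
    nlinarith [mul_nonneg k1 k2, sq_nonneg (u * w)]
  · refine hp.imp_of_mem ?_
    intro x z hx hz hxz
    simp only [abs_div]
    exact div_le_div_of_nonneg_left (abs_nonneg _) (abs_pos.2 (hne x hx)) hxz.le
  · intro b hb
    have h1 := hR b hb
    rw [abs_div, div_le_one (abs_pos.2 (hne b hb)), abs_of_neg (by linarith)]
    rw [abs_of_neg ha'] at h1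
    linarith
  · intro p hpl
    rw [hlen]
    have := hs p hpl
    push_cast
    linarith

lemma cnt (l : List ℝ) (hne : ∀ i ∈ l, i ≠ 0) : (l.map sg).sum =
    (l.countP (fun x => decide (0 < x)) : ℤ) - (l.countP (fun x => decide (x < 0)) : ℤ) := by
  induction l with
  | nil => simp
  | cons a l ih =>
    have := ih (fun i hi => hne i (by simp [hi]))
    rw [List.map_cons, List.sum_cons, this, List.countP_cons, List.countP_cons]
    unfold sg
    rcases lt_or_gt_of_ne (hne a (by simp)) with h | h
    · simp [h, h.not_gt]; ring
    · simp [h, h.not_gt]; ring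

lemma FF_nonneg (l : List ℝ) (hne : ∀ i ∈ l, i ≠ 0) (hp : l.Pairwise (fun a b => |a| < |b|)) :
    0 ≤ FF l := by
  induction l with
  | nil => simp [FF]
  | cons a l ih =>
    rw [List.pairwise_cons] at hp
    refine mul_nonneg ?_ (ih (fun i hi => hne i (by simp [hi])) hp.2)
    apply List.prod_nonneg
    intro x hx
    obtain ⟨c, hc, rfl⟩ := List.mem_map.1 hx
    exact fac_nonneg (hne c (by simp [hc])) (hp.1 c hc)

lemma main_step (n : ℕ) (IH : ∀ l : List ℝ, l.length < n → (∀ i ∈ l, i ≠ 0) →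
      l.Pairwise (fun a b => |a| < |b|) → FF l ≤ 2 ^ min (l.countP (fun x => decide (0 < x)))
        (l.countP (fun x => decide (x < 0)))) (L R : List ℝ) (hL : L ≠ [])
    (hlen : (L ++ R).length = n) (hne : ∀ i ∈ L ++ R, i ≠ 0)
    (hp : (L ++ R).Pairwise (fun a b => |a| < |b|))
    (h1 : ∀ p, p <+: R → (p.map sg).sum ≤ 0)
    (h2 : ∀ q, q <:+ L → q ≠ [] → 0 < (q.map sg).sum) :
    FF (L ++ R) ≤ 2 ^ min ((L ++ R).countP (fun x => decide (0 < x)))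
        ((L ++ R).countP (fun x => decide (x < 0))) := by
  obtain ⟨L0, a, rfl⟩ : ∃ L0 a, L = L0 ++ [a] :=
    ⟨L.dropLast, L.getLast hL, (List.dropLast_append_getLast hL).symm⟩
  have ha : 0 < a := by
    have := h2 [a] (by simp) (by simp)
    by_contra h
    simp [sg, h] at this
  have hsa : sg a = 1 := by simp [sg, ha]
  have hs : ∀ q, q <:+ L0 → 0 ≤ (q.map sg).sum := by
    rintro q ⟨t, rfl⟩
    have := h2 (q ++ [a]) ⟨t, by simp⟩ (by simp)
    simp [hsa] at this
    linarith
  rcases R with _ | ⟨a', R⟩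
  · rw [List.append_nil] at *
    have hc := h2 (L0 ++ [a]) (List.suffix_refl _) (by simp)
    rw [cnt _ hne] at hc
    have hne0 : ∀ i ∈ L0, i ≠ 0 := fun i hi => hne i (by simp [hi])
    rw [List.pairwise_append] at hp
    have hla : ∀ i ∈ L0, |i| < |a| := fun i hi => hp.2.2 i hi a (by simp)
    have ih := IH L0 (by simp at hlen; omega) hne0 hp.1
    have hb := left_bound L0 hne0 hp.1 hs (1 / a) (by positivity)
      (fun i hi => by
        have := hla i hi
        rw [abs_of_pos ha] at this
        rw [mul_one_div, div_le_one ha]; exact this.le) (fun i => 1 - i / a)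
      (fun i hi => ⟨fac_nonneg ha.ne' (hla i hi), by rw [mul_one_div]⟩)
    rw [FF_snoc]
    have hF := FF_nonneg L0 hne0 hp.1
    calc _ ≤ FF L0 * 1 := mul_le_mul_of_nonneg_left hb hF
      _ = FF L0 := mul_one _
      _ ≤ _ := ih
      _ ≤ _ := by
        apply pow_le_pow_right₀ (by norm_num)
        simp [ha, ha.not_gt]
  · have ha'0 : a' ≠ 0 := hne a' (by simp)
    have ha' : a' < 0 := by
      have := h1 [a'] (by simp)
      by_contra h
      have : 0 < a' := lt_of_le_of_ne (not_lt.1 h) ha'0.symm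
      simp [sg, this] at *
    have hsa' : sg a' = -1 := by simp [sg, ha'.not_gt]
    rw [List.append_assoc, List.singleton_append] at *
    have hsub : (L0 ++ R).Sublist (L0 ++ a :: a' :: R) :=
      List.Sublist.append_left ((List.sublist_cons_self _ _).trans (List.sublist_cons_self _ _)) _
    have hne0 : ∀ i ∈ L0 ++ R, i ≠ 0 := fun i hi => hne i (hsub.subset hi)
    have hp0 := hp.sublist hsub
    have ih := IH (L0 ++ R) (by simp at hlen ⊢; omega) hne0 hp0
    have hF := FF_nonneg _ hne0 hp0
    simp only [List.pairwise_append, List.pairwise_cons] at hp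
    obtain ⟨hpL, ⟨hpa, hpa', hpR⟩, hpX⟩ := hp
    have haa := hpa a' (by simp)
    have hla : ∀ i ∈ L0, |i| < |a| := fun i hi => hpX i hi a (by simp)
    have hla' : ∀ i ∈ L0, |i| < |a'| := fun i hi => hpX i hi a' (by simp)
    have hr := right_bound R a a' ha ha' haa (fun i hi => hne0 i (by simp [hi])) hpR hpa'
      (fun q hq => by
        have := h1 (a' :: q) (by simpa using hq)
        simp [hsa'] at this
        linarith)
    have haa2 := haa
    rw [abs_of_pos ha, abs_of_neg ha'] at haa2
    have hia' : 1 / a' < 0 := one_div_neg.2 ha'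
    have hcc : 0 < 1 / a + 1 / a' := by
      have : 1 / (-a') < 1 / a := one_div_lt_one_div_of_lt ha haa2
      rw [one_div_neg_eq_neg_one_div] at this
      linarith
    have hl := left_bound L0 (fun i hi => hne0 i (by simp [hi])) hpL hs (1 / a + 1 / a') hcc
      (fun i hi => by
        have h3 := hla i hi
        rw [abs_of_pos ha] at h3
        have h4 : |i| * (1 / a) ≤ 1 := by
          rw [mul_one_div, div_le_one ha]; exact h3.le
        have : |i| * (1 / a') ≤ 0 := mul_nonpos_of_nonneg_of_nonpos (abs_nonneg _) hia'.le
        linarith) (fun i => (1 - i / a) * (1 - i / a'))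
      (fun i hi => ⟨mul_nonneg (fac_nonneg ha.ne' (hla i hi)) (fac_nonneg ha'0 (hla' i hi)), by
        have e : (1 - i / a) * (1 - i / a') = 1 - i * (1 / a + 1 / a') +
          i ^ 2 * ((1 / a) * (1 / a')) := by ring
        have k : (1 / a) * (1 / a') ≤ 0 :=
          mul_nonpos_of_nonneg_of_nonpos (by positivity) hia'.le
        have : i ^ 2 * ((1 / a) * (1 / a')) ≤ 0 :=
          mul_nonpos_of_nonneg_of_nonpos (sq_nonneg _) k
        rw [e]; linarith⟩)
    have hl0 : 0 ≤ (L0.map (fun i => (1 - i / a) * (1 - i / a'))).prod := by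
      apply List.prod_nonneg
      intro x hx
      obtain ⟨i, hi, rfl⟩ := List.mem_map.1 hx
      exact mul_nonneg (fac_nonneg ha.ne' (hla i hi)) (fac_nonneg ha'0 (hla' i hi))
    rw [FF_pair]
    calc _ ≤ (FF (L0 ++ R) * 2) * 1 :=
          mul_le_mul (mul_le_mul_of_nonneg_left hr hF) hl hl0 (by linarith)
      _ ≤ 2 ^ min ((L0 ++ R).countP (fun x => decide (0 < x)))
        ((L0 ++ R).countP (fun x => decide (x < 0))) * 2 := by linarith
      _ = _ := by
        rw [← pow_succ]
        congr 1
        simp [ha, ha', ha.not_gt, ha'.not_gt]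
        omega

lemma main_list (n : ℕ) : ∀ l : List ℝ, l.length = n → (∀ i ∈ l, i ≠ 0) →
      l.Pairwise (fun a b => |a| < |b|) → FF l ≤ 2 ^ min (l.countP (fun x => decide (0 < x)))
        (l.countP (fun x => decide (x < 0))) := by
  induction n using Nat.strong_induction_on with
  | _ n IH0 =>
  have IH : ∀ l : List ℝ, l.length < n → (∀ i ∈ l, i ≠ 0) →
      l.Pairwise (fun a b => |a| < |b|) → FF l ≤ 2 ^ min (l.countP (fun x => decide (0 < x)))
        (l.countP (fun x => decide (x < 0))) := fun l hl => IH0 _ hl l rfl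
  intro l hlen hne hp
  obtain ⟨L, R, rfl, h1, h2⟩ := exists_split l
  by_cases hL : L = []
  · subst hL
    rw [List.nil_append] at *
    rcases R with _ | ⟨b, R⟩
    · simp [FF]
    have hb : b < 0 := by
      have := h1 [b] (by simp)
      by_contra h
      have : 0 < b := lt_of_le_of_ne (not_lt.1 h) (hne b (by simp)).symm
      simp [sg, this] at *
    obtain ⟨L', R', h, h1', h2'⟩ := exists_split ((b :: R).map (fun x => -x))
    have hL' : L' ≠ [] := by
      rintro rfl
      rw [List.nil_append] at h
      have := h1' [-b] (by rw [← h]; simp)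
      simp [sg, hb] at this
    have := main_step n IH L' R' hL' (by rw [← h]; simpa using hlen)
      (by rw [← h]
          intro i hi
          obtain ⟨c, hc, rfl⟩ := List.mem_map.1 hi
          exact neg_ne_zero.2 (hne c hc))
      (by rw [← h, List.pairwise_map]; simpa only [abs_neg] using hp) h1' h2'
    rw [← h, FF_neg, List.countP_map, List.countP_map, min_comm] at this
    simpa only [Function.comp_def, Left.neg_pos_iff, Left.neg_neg_iff] using this
  · exact main_step n IH L R hL hlen hne hp h1 h2

noncomputable def lst (y : ℕ → ℝ) (n : ℕ) : List ℝ := (List.range n).map (fun i => y (i + 1))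

lemma lst_succ (y : ℕ → ℝ) (n : ℕ) : lst y (n + 1) = lst y n ++ [y (n + 1)] := by
  simp [lst, List.range_succ]

lemma lst_prod (y : ℕ → ℝ) (n : ℕ) (g : ℝ → ℝ) :
    ((lst y n).map g).prod = ∏ i ∈ Finset.Icc 1 n, g (y i) := by
  induction n with
  | zero => simp [lst]
  | succ n ih => rw [lst_succ, Finset.prod_Icc_succ_top (by omega)]; simp [ih]

lemma FF_lst (y : ℕ → ℝ) (n : ℕ) :
    ∏ q ∈ (Finset.Icc 1 n ×ˢ Finset.Icc 1 n).filter (fun q => q.1 < q.2),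
        (1 - y q.1 / y q.2) = FF (lst y n) := by
  rw [Finset.prod_filter, Finset.prod_product]
  induction n with
  | zero => simp [lst, FF]
  | succ n ih =>
    rw [lst_succ, FF_snoc, lst_prod, ← ih, Finset.prod_Icc_succ_top (by omega)]
    have e : ∏ j ∈ Finset.Icc 1 (n + 1), (if n + 1 < j then 1 - y (n + 1) / y j else 1) = 1 := by
      apply Finset.prod_eq_one
      intro j hj
      rw [Finset.mem_Icc] at hj
      rw [if_neg (by omega)]
    simp only [e, mul_one]
    rw [← Finset.prod_mul_distrib]
    apply Finset.prod_congr rfl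
    intro i hi
    rw [Finset.mem_Icc] at hi
    rw [Finset.prod_Icc_succ_top (by omega), if_pos (by omega : i < n + 1)]

lemma lst_count (y : ℕ → ℝ) (n : ℕ) : (lst y n).countP (fun x => decide (0 < x)) =
    ((Finset.Icc 1 n).filter (fun i => 0 < y i)).card := by
  rw [Finset.card_filter]
  induction n with
  | zero => simp [lst]
  | succ n ih =>
    rw [lst_succ, Finset.sum_Icc_succ_top (by omega), List.countP_append, ih]
    simp [List.countP_cons]

lemma cnt_add (l : List ℝ) : l.countP (fun x => decide (x < 0)) +
    l.countP (fun x => decide (0 < x)) ≤ l.length := by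
  induction l with
  | nil => simp
  | cons a l ih =>
    rw [List.countP_cons, List.countP_cons, List.length_cons]
    rcases lt_trichotomy a 0 with h | h | h
    · simp [h, h.not_gt]; omega
    · simp [h]; omega
    · simp [h, h.not_gt]; omega

theorem pohst_refined (n : ℕ) (hn : 2 ≤ n) (y : ℕ → ℝ)
    (hy : ∀ i ∈ Finset.Icc 1 n, y i ≠ 0)
    (hmono : ∀ i, 1 ≤ i → i ≤ n - 1 → |y i| < |y (i + 1)|)
    (p m : ℕ)
    (hp : p = ((Finset.Icc 1 n).filter (fun i => 0 < y i)).card)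
    (hm : m = n - p) :
    ∏ q ∈ (Finset.Icc 1 n ×ˢ Finset.Icc 1 n).filter (fun q => q.1 < q.2),
        (1 - y q.1 / y q.2) ≤ 2 ^ min p m := by
  rw [FF_lst]
  have hlen : (lst y n).length = n := by simp [lst]
  have hmon : ∀ j, j ≤ n → ∀ i, 1 ≤ i → i < j → |y i| < |y j| := by
    intro j
    induction j with
    | zero => intro _ i _ h; omega
    | succ j ih =>
      intro hj i hi hij
      have h1 := hmono j (by omega) (by omega)
      rcases Nat.lt_succ_iff_lt_or_eq.1 hij with h | h
      · exact (ih (by omega) i hi h).trans h1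
      · rw [h]; exact h1
  have := main_list n (lst y n) hlen
    (by
      intro x hx
      simp only [lst, List.mem_map, List.mem_range] at hx
      obtain ⟨i, hi, rfl⟩ := hx
      exact hy _ (by rw [Finset.mem_Icc]; omega))
    (by
      rw [lst, List.pairwise_map]
      refine List.pairwise_lt_range.imp_of_mem ?_
      intro a b ha hb hab
      rw [List.mem_range] at ha hb
      exact hmon _ (by omega) _ (by omega) (by omega))
  refine this.trans ?_
  apply pow_le_pow_right₀ (by norm_num)
  have h1 := lst_count y n
  have h2 := cnt_add (lst y n)
  omega
end

section
/- Let n ≥ 1 and let v = (x_1, …, x_n) with each x_i ∈ [−1, 1] and x_i ≠ 0. Then f_n(v) := ∏_{1 ≤ i ≤ j ≤ n} (1 − ∏_{k=i}^{j} x_k) ≤ 2^{⌊(n+1)/2⌋}, where ⌊·⌋ denotes the floor function. -/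
open Finset

namespace Pohst

noncomputable def sg (z : ℝ) : ℤ := if 0 < z then 1 else -1

noncomputable def sig (l : List ℝ) : ℤ := (l.map sg).sum

noncomputable def Q : List ℝ → ℝ
  | [] => 1
  | a :: l => (l.map (fun c => 1 - a / c)).prod * Q l

noncomputable def X (A C : List ℝ) : ℝ :=
  (A.map (fun k => (C.map (fun c => 1 - k / c)).prod)).prod

@[simp] lemma sig_nil : sig [] = 0 := rfl
@[simp] lemma sig_cons (z : ℝ) (l : List ℝ) : sig (z :: l) = sg z + sig l := by simp [sig]

lemma sig_reverse (l : List ℝ) : sig l.reverse = sig l := by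
  simp [sig, List.sum_reverse]

lemma Q_append (A C : List ℝ) : Q (A ++ C) = Q A * Q C * X A C := by
  induction A with
  | nil => simp [Q, X]
  | cons a A ih =>
    simp only [List.cons_append, Q, ih, X, List.map_append, List.prod_append, List.map_cons,
      List.prod_cons]
    ring

lemma X_cons_right (A C : List ℝ) (a : ℝ) :
    X A (a :: C) = (A.map (fun k => 1 - k / a)).prod * X A C := by
  simp [X, List.prod_map_mul]

lemma X_nil_right (A : List ℝ) : X A [] = 1 := by
  simp [X]

lemma decomp (l : List ℝ) : (∀ p, p <+: l → sig p ≤ 0) ∨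
    ∃ A a B, l = A ++ a :: B ∧ 0 < a ∧ (∀ s, s <:+ A → 0 ≤ sig s) ∧
      (∀ p, p <+: B → sig p ≤ 0) ∧ (∀ p, p <+: l → sig p ≤ sig A + 1) := by
  induction l with
  | nil => left; intro p hp; simp at hp; simp [hp]
  | cons z l ih =>
    rcases ih with h | ⟨A, a, B, hl, ha, hA, hB, hm⟩
    · by_cases hz : 0 < z
      · right
        refine ⟨[], z, l, rfl, hz, ?_, h, ?_⟩
        · intro s hs; simp at hs; simp [hs]
        · intro p hp
          rcases p with _ | ⟨y, p⟩
          · simp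
          · rw [List.cons_prefix_cons] at hp
            have := h p hp.2
            simp [hp.1, sg, hz, this]
      · left
        intro p hp
        rcases p with _ | ⟨y, p⟩
        · simp
        · rw [List.cons_prefix_cons] at hp
          have := h p hp.2
          simp [hp.1, sg, hz]; omega
    · by_cases hc : 0 ≤ sg z + sig A
      · right
        refine ⟨z :: A, a, B, by simp [hl], ha, ?_, hB, ?_⟩
        · intro s hs
          rw [List.suffix_cons_iff] at hs
          rcases hs with rfl | hs
          · simpa using hc
          · exact hA s hs
        · intro p hp
          rcases p with _ | ⟨y, p⟩
          · simp; omega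
          · rw [List.cons_prefix_cons] at hp
            have := hm p hp.2
            simp [hp.1]; omega
      · left
        have h1 : sg z = 1 ∨ sg z = -1 := by unfold sg; split_ifs <;> simp
        have h2 := hA A List.suffix_rfl
        intro p hp
        rcases p with _ | ⟨y, p⟩
        · simp
        · rw [List.cons_prefix_cons] at hp
          have := hm p hp.2
          simp [hp.1]; omega

lemma g_nonneg {u v z : ℝ} (hv : 0 ≤ v) (huv : v ≤ u) (hz : |z| * u ≤ 1) :
    0 ≤ (1 - z * u) * (1 + z * v) := by
  have h1 : |z * u| ≤ 1 := by rw [abs_mul, abs_of_nonneg (hv.trans huv)]; exact hz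
  have h2 : |z * v| ≤ 1 := by
    rw [abs_mul, abs_of_nonneg hv]
    exact (mul_le_mul_of_nonneg_left huv (abs_nonneg z)).trans hz
  rw [abs_le] at h1 h2
  exact mul_nonneg (by linarith) (by linarith)

lemma g_anti {u v t T : ℝ} (hv : 0 ≤ v) (huv : v ≤ u) (ht : 0 ≤ t) (hT : t ≤ T) :
    (1 - T * u) * (1 + T * v) ≤ (1 - t * u) * (1 + t * v) := by
  have h1 : 0 ≤ (T - t) * (u - v) := mul_nonneg (by linarith) (by linarith)
  have h2 : 0 ≤ (T - t) * (T + t) * (u * v) :=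
    mul_nonneg (mul_nonneg (by linarith) (by linarith)) (mul_nonneg (by linarith) hv)
  nlinarith

lemma gg_le {u v t : ℝ} (hv : 0 ≤ v) (huv : v ≤ u) (ht : 0 ≤ t) (hT : t * u ≤ 1) :
    ((1 - t * u) * (1 + t * v)) * ((1 + t * u) * (1 - t * v)) ≤ 1 := by
  have hu : 0 ≤ t * u := mul_nonneg ht (hv.trans huv)
  have hv' : 0 ≤ t * v := mul_nonneg ht hv
  have hvv : t * v ≤ 1 := (mul_le_mul_of_nonneg_left huv ht).trans hT
  have e : ((1 - t * u) * (1 + t * v)) * ((1 + t * u) * (1 - t * v))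
      = (1 - (t*u)^2) * (1 - (t*v)^2) := by ring
  rw [e]
  have : (t*u)^2 ≤ 1 := by nlinarith
  have : (t*v)^2 ≤ 1 := by nlinarith
  nlinarith [sq_nonneg (t*u), sq_nonneg (t*v)]

lemma prod_g_nonneg {u v T : ℝ} (hv : 0 ≤ v) (huv : v ≤ u) (hTu : T * u ≤ 1)
    (Z : List ℝ) (hZT : ∀ z ∈ Z, |z| ≤ T) :
    0 ≤ (Z.map (fun z => (1 - z * u) * (1 + z * v))).prod := by
  apply List.prod_nonneg
  intro a ha
  simp only [List.mem_map] at ha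
  obtain ⟨z, hz, rfl⟩ := ha
  exact g_nonneg hv huv ((mul_le_mul_of_nonneg_right (hZT z hz) (hv.trans huv)).trans hTu)

/-- One step of the ballot induction. `D` is the target constant, `R` the rest of the product. -/
lemma step {u v t T z R D : ℝ} (hv : 0 ≤ v) (huv : v ≤ u) (hTu : T * u ≤ 1) (ht : t = |z|)
    (htT : t ≤ T) (hR : 0 ≤ R) (c : ℕ) (hD : 0 ≤ D)
    (hpos : 0 < z → R * ((1 - t * u) * (1 + t * v)) ^ (c + 1) ≤ D)
    (hneg : ¬ 0 < z → ∃ d, c = d + 1 ∧ R * ((1 - t * u) * (1 + t * v)) ^ d ≤ D) :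
    ((1 - z * u) * (1 + z * v) * R) * ((1 - T * u) * (1 + T * v)) ^ c ≤ D := by
  have ht0 : 0 ≤ t := ht ▸ abs_nonneg z
  have hu := hv.trans huv
  have htu : t * u ≤ 1 := (mul_le_mul_of_nonneg_right htT hu).trans hTu
  have hT0 : 0 ≤ (1 - T * u) * (1 + T * v) :=
    g_nonneg hv huv (by rwa [abs_of_nonneg (ht0.trans htT)])
  have hpow := pow_le_pow_left₀ hT0 (g_anti hv huv ht0 htT) c
  have hz0 : 0 ≤ (1 - z * u) * (1 + z * v) := g_nonneg hv huv (by rwa [← ht])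
  have hP0 : 0 ≤ (1 - t * u) * (1 + t * v) := g_nonneg hv huv (by rwa [abs_of_nonneg ht0])
  refine (mul_le_mul_of_nonneg_left hpow (mul_nonneg hz0 hR)).trans ?_
  by_cases hz : 0 < z
  · have := hpos hz
    rw [abs_of_pos hz] at ht
    subst ht
    rw [pow_succ] at this
    linarith
  · obtain ⟨d, rfl, hd⟩ := hneg hz
    rw [abs_of_nonpos (not_lt.1 hz)] at ht
    have hz' : z = -t := by linarith
    have hg := gg_le hv huv ht0 htu
    have hY := mul_nonneg hR (pow_nonneg hP0 d)
    have : (1 - z * u) * (1 + z * v) * R * ((1 - t * u) * (1 + t * v)) ^ (d+1)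
      = (((1 - t * u) * (1 + t * v)) * ((1 + t * u) * (1 - t * v))) *
        (R * ((1 - t * u) * (1 + t * v)) ^ d) := by
      rw [hz']; ring
    rw [this]
    exact (mul_le_of_le_one_left hY hg).trans hd

lemma ballot {u v : ℝ} (hv : 0 ≤ v) (huv : v ≤ u) (Z : List ℝ) :
    ∀ (T : ℝ) (c : ℕ), 0 ≤ T → T * u ≤ 1 → Z.Pairwise (fun a b => |b| ≤ |a|) →
      (∀ z ∈ Z, |z| ≤ T) → (∀ p, p <+: Z → 0 ≤ (c : ℤ) + sig p) →
    (Z.map (fun z => (1 - z * u) * (1 + z * v))).prod * ((1 - T * u) * (1 + T * v)) ^ c ≤ 1 := by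
  induction Z with
  | nil =>
    intro T c hT hTu _ _ _
    have h0 : 0 ≤ (1 - T * u) * (1 + T * v) :=
      g_nonneg hv huv (by rwa [abs_of_nonneg hT])
    have h1 := g_anti hv huv le_rfl hT
    simp only [List.map_nil, List.prod_nil, one_mul]
    exact pow_le_one₀ h0 (by simpa using h1)
  | cons z Z ih =>
    intro T c hT hTu hpw hZT hb
    rw [List.pairwise_cons] at hpw
    have hzT := hZT z (by simp)
    have hzu : |z| * u ≤ 1 := (mul_le_mul_of_nonneg_right hzT (hv.trans huv)).trans hTu
    rw [List.map_cons, List.prod_cons]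
    have hb' : ∀ p, p <+: Z → 0 ≤ (c : ℤ) + (sg z + sig p) := fun p hp => by
      simpa using hb (z :: p) (by rw [List.cons_prefix_cons]; exact ⟨rfl, hp⟩)
    refine step hv huv hTu rfl hzT
      (prod_g_nonneg hv huv hTu Z (fun y hy => hZT y (by simp [hy]))) c zero_le_one ?_ ?_
    · intro hz
      refine ih _ _ (abs_nonneg z) hzu hpw.2 hpw.1 ?_
      intro p hp
      have := hb' p hp
      simp only [sg, hz, if_true] at this
      push_cast; linarith
    · intro hz
      have h0 := hb' [] (List.nil_prefix)
      simp only [sg, hz, if_false, sig_nil] at h0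
      obtain ⟨d, rfl⟩ : ∃ d, c = d + 1 := ⟨c - 1, by omega⟩
      refine ⟨d, rfl, ih _ _ (abs_nonneg z) hzu hpw.2 hpw.1 ?_⟩
      intro p hp
      have := hb' p hp
      simp only [sg, hz, if_false] at this
      push_cast at this; linarith

lemma triple {u v t : ℝ} (hv : 0 ≤ v) (huv : v ≤ u) (hu : 0 < u) (ht : 0 ≤ t) (htu : t * u ≤ 1) :
    (1 + v / u) * ((1 + t * u) * (1 - t * v)) ≤ 2 := by
  obtain ⟨w, rfl⟩ : ∃ w, v = w * u := ⟨v / u, by field_simp⟩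
  have hw : w * u / u = w := by field_simp
  have hw0 : 0 ≤ w := by rw [← hw]; positivity
  have hw1 : w ≤ 1 := by rw [← hw]; exact (div_le_one hu).2 huv
  rw [hw]
  have h0 : 0 ≤ t * u := by positivity
  have : t * (w * u) = w * (t * u) := by ring
  rw [this]
  generalize t * u = y at *
  have key : (1 + w) * ((1 + y) * (1 - w * y)) ≤ 2 := by
    have a : 0 ≤ (1 - w) * (1 - y) := mul_nonneg (by linarith) (by linarith)
    have b : 0 ≤ w * y := mul_nonneg hw0 h0
    have b1 : w * y ≤ 1 := by nlinarith
    have c : (1 + w) * (1 + y) ≤ 2 * (1 + w * y) := by nlinarith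
    have : (1 + w) * (1 + y) * (1 - w * y) ≤ 2 * (1 + w * y) * (1 - w * y) :=
      mul_le_mul_of_nonneg_right c (by linarith)
    nlinarith [sq_nonneg (w * y)]
  exact key

lemma ballot2 {u v : ℝ} (hv : 0 ≤ v) (huv : v ≤ u) (hu : 0 < u) (Z : List ℝ) :
    ∀ (T : ℝ) (c : ℕ), 0 ≤ T → T * u ≤ 1 → Z.Pairwise (fun a b => |b| ≤ |a|) →
      (∀ z ∈ Z, |z| ≤ T) → (∀ p, p <+: Z → -1 ≤ (c : ℤ) + sig p) →
    ((1 + v / u) * (Z.map (fun z => (1 - z * u) * (1 + z * v))).prod) *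
      ((1 - T * u) * (1 + T * v)) ^ c ≤ 2 := by
  have hq0 : 0 ≤ v / u := by positivity
  have hq1 : v / u ≤ 1 := (div_le_one hu).2 huv
  induction Z with
  | nil =>
    intro T c hT hTu _ _ _
    have h0 : 0 ≤ (1 - T * u) * (1 + T * v) :=
      g_nonneg hv huv (by rwa [abs_of_nonneg hT])
    have h1 := g_anti hv huv le_rfl hT
    simp only [List.map_nil, List.prod_nil, mul_one]
    have := pow_le_one₀ (n := c) h0 (by simpa using h1)
    have := pow_nonneg h0 c
    nlinarith
  | cons z Z ih =>
    intro T c hT hTu hpw hZT hb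
    rw [List.pairwise_cons] at hpw
    have hzT := hZT z (by simp)
    have hzu : |z| * u ≤ 1 := (mul_le_mul_of_nonneg_right hzT (hv.trans huv)).trans hTu
    rw [List.map_cons, List.prod_cons]
    have hb' : ∀ p, p <+: Z → -1 ≤ (c : ℤ) + (sg z + sig p) := fun p hp => by
      simpa using hb (z :: p) (by rw [List.cons_prefix_cons]; exact ⟨rfl, hp⟩)
    have hR := prod_g_nonneg hv huv hTu Z (fun y hy => hZT y (by simp [hy]))
    by_cases hc : c = 0 ∧ ¬ 0 < z
    · obtain ⟨rfl, hz⟩ := hc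
      have h1 := ballot hv huv Z |z| 0 (abs_nonneg z) hzu hpw.2 hpw.1 (by
        intro p hp
        have := hb' p hp
        simp only [sg, hz, if_false] at this
        push_cast at this ⊢; linarith)
      have h2 := triple hv huv hu (abs_nonneg z) hzu
      have hz' : z = -|z| := by rw [abs_of_nonpos (not_lt.1 hz)]; ring
      have e : (1 - z * u) * (1 + z * v) = (1 + |z| * u) * (1 - |z| * v) := by
        rw [abs_of_nonpos (not_lt.1 hz)]; ring
      rw [pow_zero, mul_one] at h1 ⊢
      rw [e, ← mul_assoc]
      have h3 : 0 ≤ (1 + v / u) * ((1 + |z| * u) * (1 - |z| * v)) := by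
        rw [← e]; exact mul_nonneg (by linarith) (g_nonneg hv huv hzu)
      nlinarith
    · have := step (R := (1 + v / u) * (Z.map (fun z => (1 - z * u) * (1 + z * v))).prod)
        hv huv hTu rfl hzT (mul_nonneg (by linarith) hR) c zero_le_two ?_ ?_
      · refine le_trans (le_of_eq ?_) this
        ring
      · intro hz
        refine ih _ _ (abs_nonneg z) hzu hpw.2 hpw.1 ?_
        intro p hp
        have := hb' p hp
        simp only [sg, hz, if_true] at this
        push_cast; linarith
      · intro hz
        obtain ⟨d, rfl⟩ : ∃ d, c = d + 1 := ⟨c - 1, by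
          have : c ≠ 0 := fun h => hc ⟨h, hz⟩
          omega⟩
        refine ⟨d, rfl, ih _ _ (abs_nonneg z) hzu hpw.2 hpw.1 ?_⟩
        intro p hp
        have := hb' p hp
        simp only [sg, hz, if_false] at this
        push_cast at this; linarith

def Good (l : List ℝ) : Prop := l.Pairwise (fun a b => |a| ≤ |b|) ∧ ∀ z ∈ l, z ≠ 0

lemma Good.sublist {l m : List ℝ} (h : Good m) (hs : l.Sublist m) : Good l :=
  ⟨h.1.sublist hs, fun z hz => h.2 z (hs.subset hz)⟩

lemma Q_nonneg (l : List ℝ) (h : Good l) : 0 ≤ Q l := by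
  induction l with
  | nil => simp [Q]
  | cons a l ih =>
    have h' := h.1
    rw [List.pairwise_cons] at h'
    refine mul_nonneg (List.prod_nonneg ?_) (ih (h.sublist (List.sublist_cons_self a l)))
    intro y hy
    simp only [List.mem_map] at hy
    obtain ⟨c, hc, rfl⟩ := hy
    have : |a / c| ≤ 1 := by
      rw [abs_div]
      exact div_le_one_of_le₀ (h'.1 c hc) (abs_nonneg c)
    linarith [le_abs_self (a / c)]

lemma Q_neg (l : List ℝ) : Q (l.map (fun z => -z)) = Q l := by
  induction l with
  | nil => simp [Q]
  | cons a l ih =>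
    simp only [List.map_cons, Q, ih, List.map_map]
    congr 3
    funext c
    simp

/-- The left-hand product. -/
lemma left_le {u v : ℝ} {A : List ℝ} {T : ℝ} (hv : 0 ≤ v) (huv : v ≤ u) (hT : 0 ≤ T)
    (hTu : T * u ≤ 1)
    (hA : A.Pairwise (fun a b => |a| ≤ |b|)) (hAT : ∀ z ∈ A, |z| ≤ T)
    (hs : ∀ s, s <:+ A → 0 ≤ sig s) :
    (A.map (fun z => (1 - z * u) * (1 + z * v))).prod ≤ 1 := by
  have := ballot hv huv A.reverse T 0 hT hTu (by rwa [List.pairwise_reverse])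
    (by simpa using hAT) (by
      intro p hp
      have h := hs p.reverse (by rw [← List.reverse_prefix]; simpa using hp)
      rw [sig_reverse] at h
      simpa using h)
  simpa [List.map_reverse, List.prod_reverse] using this

lemma sig_map_neg_inv (l : List ℝ) (h : ∀ z ∈ l, z ≠ 0) :
    sig (l.map (fun z => -z⁻¹)) = - sig l := by
  induction l with
  | nil => simp
  | cons z l ih =>
    have hz := h z (by simp)
    rw [List.map_cons, sig_cons, sig_cons, ih (fun y hy => h y (by simp [hy]))]
    have : sg (-z⁻¹) = - sg z := by
      rcases lt_or_gt_of_ne hz with h | h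
      · simp [sg, h, h.not_gt]
      · simp [sg, h, h.le]
    rw [this]; ring

/-- The right-hand product. -/
lemma right_le {a b : ℝ} {B : List ℝ} (ha : 0 < a) (hb : b < 0) (hab : |a| ≤ |b|)
    (hB : B.Pairwise (fun a b => |a| ≤ |b|)) (hbB : ∀ z ∈ B, |b| ≤ |z|)
    (h0 : ∀ z ∈ B, z ≠ 0) (hs : ∀ p, p <+: B → sig p ≤ 1) :
    (1 - a / b) * (B.map (fun z => (1 - a / z) * (1 - b / z))).prod ≤ 2 := by
  rw [abs_of_pos ha, abs_of_neg hb] at hab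
  have hb' : 0 < -b := by linarith
  have := ballot2 ha.le hab hb' (B.map (fun z => -z⁻¹)) ((-b)⁻¹) 0 (by positivity)
    (by rw [inv_mul_cancel₀ hb'.ne']) ?_ ?_ ?_
  · rw [pow_zero, mul_one, List.map_map] at this
    refine le_trans (le_of_eq ?_) this
    congr 1
    · rw [div_neg]; ring
    · congr 2
      funext z
      simp only [Function.comp, div_eq_mul_inv]
      ring
  · rw [List.pairwise_map]
    refine hB.imp_of_mem ?_
    intro x y hx hy hxy
    rw [abs_neg, abs_neg, abs_inv, abs_inv]
    exact inv_anti₀ (abs_pos.2 (h0 x hx)) hxy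
  · intro z hz
    simp only [List.mem_map] at hz
    obtain ⟨y, hy, rfl⟩ := hz
    rw [abs_neg, abs_inv]
    have := hbB y hy
    rw [abs_of_neg hb] at this
    exact inv_anti₀ hb' this
  · intro p hp
    rw [List.prefix_map_iff] at hp
    obtain ⟨q, hq, rfl⟩ := hp
    rw [sig_map_neg_inv q (fun z hz => h0 z (hq.subset hz))]
    have := hs q hq
    push_cast; linarith

lemma main (n : ℕ) : ∀ l : List ℝ, l.length = n → Good l → Q l ≤ 2 ^ (n / 2) := by
  induction n using Nat.strong_induction_on with
  | _ n ih =>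
  -- the case of a decomposition
  have key : ∀ l : List ℝ, l.length = n → Good l → (∃ A a B, l = A ++ a :: B ∧ 0 < a ∧
      (∀ s, s <:+ A → 0 ≤ sig s) ∧ (∀ p, p <+: B → sig p ≤ 0)) → Q l ≤ 2 ^ (n / 2) := by
    rintro l hn hl ⟨A, a, B, rfl, ha, hA, hB⟩
    have hpw := hl.1
    rw [List.pairwise_append, List.pairwise_cons] at hpw
    obtain ⟨hpA, ⟨haB, hpB⟩, hAB⟩ := hpw
    have hAa : ∀ z ∈ A, |z| ≤ a := fun z hz => by
      simpa [abs_of_pos ha] using hAB z hz a (by simp)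
    rcases B with _ | ⟨b, B⟩
    · have hgA : Good A := hl.sublist (List.sublist_append_left _ _)
      have h1 := left_le (v := 0) (u := a⁻¹) le_rfl (by positivity) ha.le
        (by rw [mul_inv_cancel₀ ha.ne']) hpA hAa hA
      have h2 := ih A.length (by rw [← hn]; simp) A rfl hgA
      have h3 := Q_nonneg A hgA
      have h4 : Q (A ++ [a]) = Q A * (A.map (fun z => (1 - z * a⁻¹) * (1 + z * 0))).prod := by
        rw [Q_append, X_cons_right, X_nil_right]
        simp [Q, div_eq_mul_inv]
      rw [h4]
      refine (mul_le_of_le_one_right h3 h1).trans (h2.trans ?_)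
      apply pow_le_pow_right₀ one_le_two
      have : A.length + 1 = n := by simpa using hn
      omega
    · have hb0 : b ≠ 0 := hl.2 b (by simp)
      have hb : b < 0 := by
        have := hB [b] (by simp)
        by_contra hcon
        have : 0 < b := lt_of_le_of_ne (not_lt.1 hcon) hb0.symm
        simp [sg, this] at *
      have hab := haB b (by simp)
      rw [List.pairwise_cons] at hpB
      have hgAB : Good (A ++ B) := hl.sublist
        (List.Sublist.append_left ((List.sublist_cons_self b B).trans (List.sublist_cons_self a _)) A)
      have h2 := ih (A ++ B).length (by rw [← hn]; simp) _ rfl hgAB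
      have h3 := Q_nonneg _ hgAB
      have hab' : a ≤ -b := by rwa [abs_of_pos ha, abs_of_neg hb] at hab
      have hb' : 0 < -b := by linarith
      have h1 := left_le (v := (-b)⁻¹) (u := a⁻¹) (by positivity) (inv_anti₀ ha hab') ha.le
        (by rw [mul_inv_cancel₀ ha.ne']) hpA hAa hA
      have h1' : 0 ≤ (A.map (fun z => (1 - z * a⁻¹) * (1 + z * (-b)⁻¹))).prod :=
        prod_g_nonneg (by positivity) (inv_anti₀ ha hab')
          (by rw [mul_inv_cancel₀ ha.ne']) A hAa
      have h5 := right_le ha hb hab hpB.2 hpB.1 (fun z hz => hl.2 z (by simp [hz])) (by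
        intro p hp
        have := hB (b :: p) (by rw [List.cons_prefix_cons]; exact ⟨rfl, hp⟩)
        simp [sg, hb.not_gt] at this
        linarith)
      have h4 : Q (A ++ a :: b :: B) = Q (A ++ B) *
          (A.map (fun z => (1 - z * a⁻¹) * (1 + z * (-b)⁻¹))).prod *
          ((1 - a / b) * (B.map (fun z => (1 - a / z) * (1 - b / z))).prod) := by
        have e : (fun z : ℝ => (1 - z * a⁻¹) * (1 + z * (-b)⁻¹)) =
            fun z => (1 - z / a) * (1 - z / b) := by
          funext z; rw [inv_neg]; ring
        rw [e, Q_append, X_cons_right, X_cons_right, Q_append, List.prod_map_mul,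
          List.prod_map_mul]
        simp only [Q, List.map_cons, List.prod_cons]
        ring
      rw [h4]
      have hlen : (A ++ B).length + 2 = n := by rw [← hn]; simp; omega
      have h6 : Q (A ++ B) * (A.map (fun z => (1 - z * a⁻¹) * (1 + z * (-b)⁻¹))).prod
          ≤ 2 ^ ((A ++ B).length / 2) := (mul_le_of_le_one_right h3 h1).trans h2
      have h7 := mul_nonneg h3 h1'
      have h8 : n / 2 = (A ++ B).length / 2 + 1 := by omega
      rw [h8, pow_succ]
      refine (mul_le_mul_of_nonneg_left h5 h7).trans ?_
      exact mul_le_mul_of_nonneg_right h6 zero_le_two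
  intro l hn hl
  rcases decomp l with h | ⟨A, a, B, h1, h2, h3, h4, _⟩
  · rcases l with _ | ⟨z, l⟩
    · simp [Q]; exact one_le_pow₀ one_le_two
    · have hz0 : z ≠ 0 := hl.2 z (by simp)
      have hz : z < 0 := by
        have := h [z] (by simp)
        by_contra hcon
        have : 0 < z := lt_of_le_of_ne (not_lt.1 hcon) hz0.symm
        simp [sg, this] at *
      rw [← Q_neg]
      have hg : Good ((z :: l).map (fun z => -z)) := by
        refine ⟨?_, ?_⟩
        · rw [List.pairwise_map]; simpa using hl.1
        · intro y hy
          rw [List.mem_map] at hy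
          obtain ⟨w, hw, rfl⟩ := hy
          exact neg_ne_zero.2 (hl.2 w hw)
      refine key _ (by simpa using hn) hg ?_
      rcases decomp ((z :: l).map (fun z => -z)) with h' | ⟨A, a, B, h1, h2, h3, h4, _⟩
      · exfalso
        have := h' [-z] (by simp)
        simp [sg, hz] at this
      · exact ⟨A, a, B, h1, h2, h3, h4⟩
  · exact key l hn hl ⟨A, a, B, h1, h2, h3, h4⟩

lemma prod_list_range (f : ℕ → ℝ) (n : ℕ) :
    ((List.range n).map f).prod = ∏ i ∈ Finset.range n, f i := by
  induction n with
  | zero => simp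
  | succ n ih => rw [List.range_succ, List.map_append, List.prod_append, ih,
      Finset.prod_range_succ]; simp

lemma bridge (x : ℕ → ℝ) (hx : ∀ i, x i ≠ 0) (n : ℕ) :
    ∏ j ∈ Finset.Icc 1 n, ∏ i ∈ Finset.Icc 1 j, (1 - ∏ k ∈ Finset.Icc i j, x k)
      = Q ((List.range (n + 1)).map (fun j => (∏ k ∈ Finset.Icc 1 j, x k)⁻¹)) := by
  induction n with
  | zero => simp [Q]
  | succ n ih =>
    rw [List.range_succ, List.map_append, Q_append, ← ih, Finset.prod_Icc_succ_top (by omega)]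
    simp only [List.map_cons, List.map_nil, Q, X_cons_right, X_nil_right, List.prod_nil, mul_one,
      List.map_map]
    congr 1
    rw [prod_list_range, Finset.range_eq_Ico, ← Finset.Ico_add_one_right_eq_Icc 1 (n + 1),
      ← Finset.prod_Ico_add' _ 0 (n + 1) 1]
    refine Finset.prod_congr (by simp) ?_
    intro i hi
    rw [Finset.mem_Ico] at hi
    have hne : ∀ j, ∏ k ∈ Finset.Icc 1 j, x k ≠ 0 :=
      fun j => Finset.prod_ne_zero_iff.2 (fun k _ => hx k)
    have hs : (∏ k ∈ Finset.Icc 1 i, x k) * ∏ k ∈ Finset.Icc (i + 1) (n + 1), x k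
        = ∏ k ∈ Finset.Icc 1 (n + 1), x k := by
      have := Finset.prod_Ico_consecutive x (show 1 ≤ i + 1 by omega)
        (show i + 1 ≤ n + 1 + 1 by omega)
      simpa only [Finset.Ico_add_one_right_eq_Icc] using this
    simp only [Function.comp]
    rw [Finset.Ico_add_one_right_eq_Icc, ← hs]
    have := hne i
    field_simp

end Pohst

theorem pohst_inequality (n : ℕ) (hn : 1 ≤ n) (x : ℕ → ℝ)
    (hx : ∀ i ∈ Finset.Icc 1 n, x i ∈ Set.Icc (-1 : ℝ) 1 ∧ x i ≠ 0) :
    ∏ q ∈ (Finset.Icc 1 n ×ˢ Finset.Icc 1 n).filter (fun q => q.1 ≤ q.2),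
        (1 - ∏ k ∈ Finset.Icc q.1 q.2, x k) ≤ 2 ^ ((n + 1) / 2) := by
  classical
  set y : ℕ → ℝ := fun i => if i ∈ Finset.Icc 1 n then x i else 1 with hy
  have hy0 : ∀ i, y i ≠ 0 := by
    intro i; simp only [hy]; split_ifs with h
    · exact (hx i h).2
    · exact one_ne_zero
  have hy1 : ∀ i, |y i| ≤ 1 := by
    intro i; simp only [hy]; split_ifs with h
    · exact abs_le.2 (hx i h).1
    · simp
  have h1 : ∏ q ∈ (Finset.Icc 1 n ×ˢ Finset.Icc 1 n).filter (fun q => q.1 ≤ q.2),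
        (1 - ∏ k ∈ Finset.Icc q.1 q.2, x k)
      = ∏ j ∈ Finset.Icc 1 n, ∏ i ∈ Finset.Icc 1 j, (1 - ∏ k ∈ Finset.Icc i j, y k) := by
    rw [Finset.prod_filter, Finset.prod_product_right]
    refine Finset.prod_congr rfl ?_
    intro j hj
    rw [Finset.mem_Icc] at hj
    rw [← Finset.prod_filter]
    refine Finset.prod_congr ?_ ?_
    · ext i; simp only [Finset.mem_filter, Finset.mem_Icc]; omega
    · intro i hi
      rw [Finset.mem_Icc] at hi
      congr 1
      refine Finset.prod_congr rfl ?_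
      intro k hk
      rw [Finset.mem_Icc] at hk
      simp only [hy]
      rw [if_pos (Finset.mem_Icc.2 (by omega))]
  rw [h1, Pohst.bridge y hy0 n]
  refine Pohst.main (n + 1) _ (by simp) ⟨?_, ?_⟩
  · rw [List.pairwise_map]
    have hanti : Antitone (fun j => |∏ k ∈ Finset.Icc 1 j, y k|) := by
      apply antitone_nat_of_succ_le
      intro j
      rw [Finset.prod_Icc_succ_top (by omega), abs_mul]
      exact mul_le_of_le_one_right (abs_nonneg _) (hy1 _)
    refine List.pairwise_lt_range.imp ?_
    intro i j hij
    rw [abs_inv, abs_inv]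
    exact inv_anti₀ (abs_pos.2 (Finset.prod_ne_zero_iff.2 (fun k _ => hy0 k))) (hanti hij.le)
  · intro z hz
    rw [List.mem_map] at hz
    obtain ⟨j, _, rfl⟩ := hz
    exact inv_ne_zero (Finset.prod_ne_zero_iff.2 (fun k _ => hy0 k))
end

section
/- For every v = (x_1, …, x_n) ∈ ([−1,1]∖{0})^n, the set J_v of non-canonical index pairs admits a good partition: there is a partition π_v of J_v such that every block p ∈ π_v is of one of the following three types. (1) p = {(i,j)} is a singleton with s(i,j) = +1. (2) p = {(i,j), (i',j')} with s(i,j) = +1, s(i',j') = −1, and either (i' ≤ i and j = j') or (i' = i and j ≤ j'). (3) p = {(i,j), (i−l,j), (i,j+l'), (i−l,j+l')} with l, l' ≥ 1, s(i,j) = s(i−l,j+l') = +1 and s(i−l,j) = s(i,j+l') = −1. -/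
open Finset

/-- The product sign `s(i,j) = ∏_{k=i}^{j} sign(x_k)`. -/
noncomputable def psign (x : ℕ → ℝ) (i j : ℕ) : ℝ :=
  ∏ k ∈ Finset.Icc i j, Real.sign (x k)

open Classical in
/-- The set `J_v` of non-canonical index pairs: `s(i,j) = (-1)^(i+j)`. -/
noncomputable def Jv (n : ℕ) (x : ℕ → ℝ) : Finset (ℕ × ℕ) :=
  (Finset.Icc 1 n ×ˢ Finset.Icc 1 n).filter
    (fun q => q.1 ≤ q.2 ∧ psign x q.1 q.2 = (-1 : ℝ) ^ (q.1 + q.2))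

/-- Type (1): a singleton `{(i,j)}` with `s(i,j) = +1`. -/
def IsType1 (x : ℕ → ℝ) (p : Finset (ℕ × ℕ)) : Prop :=
  ∃ i j : ℕ, p = {(i, j)} ∧ psign x i j = 1

/-- Type (2): `{(i,j), (i',j')}` with `s(i,j) = +1`, `s(i',j') = -1`, and
`(i' ≤ i ∧ j = j')` or `(i' = i ∧ j ≤ j')`. -/
def IsType2 (x : ℕ → ℝ) (p : Finset (ℕ × ℕ)) : Prop :=
  ∃ i j i' j' : ℕ, p = {(i, j), (i', j')} ∧
    psign x i j = 1 ∧ psign x i' j' = -1 ∧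
    ((i' ≤ i ∧ j = j') ∨ (i' = i ∧ j ≤ j'))

/-- Type (3): `{(i,j), (i-l,j), (i,j+l'), (i-l,j+l')}` with `l, l' ≥ 1`,
`s(i,j) = s(i-l,j+l') = +1` and `s(i-l,j) = s(i,j+l') = -1`. -/
def IsType3 (x : ℕ → ℝ) (p : Finset (ℕ × ℕ)) : Prop :=
  ∃ i j l l' : ℕ, 1 ≤ l ∧ 1 ≤ l' ∧
    p = {(i, j), (i - l, j), (i, j + l'), (i - l, j + l')} ∧
    psign x i j = 1 ∧ psign x (i - l) (j + l') = 1 ∧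
    psign x (i - l) j = -1 ∧ psign x i (j + l') = -1

def Blk (t : Finset (ℕ × ℕ)) : Prop :=
  (∃ a b, Odd (a + b) ∧ t = {(a, b)}) ∨
  (∃ a a' b, a' < a ∧ Odd (a + b) ∧ Even (a' + b) ∧ t = {(a, b), (a', b)}) ∨
  (∃ a b b', b < b' ∧ Odd (a + b) ∧ Even (a + b') ∧ t = {(a, b), (a, b')}) ∨
  (∃ a a' b b', a' < a ∧ b < b' ∧ Odd (a + b) ∧ Even (a' + b) ∧ Even (a + b') ∧
    t = {(a, b), (a', b), (a, b'), (a', b')})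

inductive GoodS : Finset (ℕ × ℕ) → Prop
  | empty : GoodS ∅
  | add (s t : Finset (ℕ × ℕ)) : GoodS s → Blk t → Disjoint s t → GoodS (s ∪ t)

lemma GoodS.of_blk {t : Finset (ℕ × ℕ)} (h : Blk t) : GoodS t := by
  have := GoodS.add ∅ t GoodS.empty h (by simp)
  simpa using this

lemma GoodS.union {s t : Finset (ℕ × ℕ)} (hs : GoodS s) (ht : GoodS t) :
    Disjoint s t → GoodS (s ∪ t) := by
  induction ht with
  | empty => intro _; simpa using hs
  | add u v hu hv huv ih =>
    intro hd
    rw [Finset.disjoint_union_right] at hd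
    rw [← Finset.union_assoc]
    refine GoodS.add _ _ (ih hd.1) hv ?_
    rw [Finset.disjoint_union_left]
    exact ⟨hd.2, huv⟩

lemma Blk.map {t : Finset (ℕ × ℕ)} (h : Blk t) (e : ℕ → ℕ) (he : StrictMono e)
    (hp : ∀ a b, Even (e a + e b) ↔ Even (a + b)) :
    Blk (t.image (fun q => (e q.1, e q.2))) := by
  have ho : ∀ a b, Odd (e a + e b) ↔ Odd (a + b) := by
    intro a b
    rw [← Nat.not_even_iff_odd, ← Nat.not_even_iff_odd, hp]
  rcases h with ⟨a, b, h1, rfl⟩ | ⟨a, a', b, h1, h2, h3, rfl⟩ | ⟨a, b, b', h1, h2, h3, rfl⟩ |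
    ⟨a, a', b, b', h1, h2, h3, h4, h5, rfl⟩
  · exact Or.inl ⟨e a, e b, (ho _ _).2 h1, by simp⟩
  · exact Or.inr (Or.inl ⟨e a, e a', e b, he h1, (ho _ _).2 h2, (hp _ _).2 h3,
      by simp [Finset.image_insert]⟩)
  · exact Or.inr (Or.inr (Or.inl ⟨e a, e b, e b', he h1, (ho _ _).2 h2, (hp _ _).2 h3,
      by simp [Finset.image_insert]⟩))
  · exact Or.inr (Or.inr (Or.inr ⟨e a, e a', e b, e b', he h1, he h2, (ho _ _).2 h3,
      (hp _ _).2 h4, (hp _ _).2 h5, by simp [Finset.image_insert]⟩))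

lemma GoodS.map {t : Finset (ℕ × ℕ)} (h : GoodS t) (e : ℕ → ℕ) (he : StrictMono e)
    (hp : ∀ a b, Even (e a + e b) ↔ Even (a + b)) :
    GoodS (t.image (fun q => (e q.1, e q.2))) := by
  induction h with
  | empty => simpa using GoodS.empty
  | add s t hs ht hd ih =>
    rw [Finset.image_union]
    refine GoodS.add _ _ ih (ht.map e he hp) ?_
    rw [Finset.disjoint_image]
    · exact hd
    · rintro ⟨a, b⟩ ⟨c, d⟩ hq
      simp only [Prod.mk.injEq] at hq
      rw [he.injective hq.1, he.injective hq.2]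

lemma good_biUnion (U : Finset ℕ) (φ : ℕ → Finset (ℕ × ℕ))
    (h1 : ∀ d ∈ U, GoodS (φ d))
    (hd : ∀ d ∈ U, ∀ d' ∈ U, d ≠ d' → Disjoint (φ d) (φ d')) : GoodS (U.biUnion φ) := by
  induction U using Finset.induction_on with
  | empty => simpa using GoodS.empty
  | insert a s ha ih =>
    rw [Finset.biUnion_insert]
    refine GoodS.union (h1 a (by simp)) (ih ?_ ?_) ?_
    · intro d hds; exact h1 d (by simp [hds])
    · intro d hds d' hds'; exact hd d (by simp [hds]) d' (by simp [hds'])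
    · rw [Finset.disjoint_biUnion_right]
      intro i hi
      exact hd a (by simp) i (by simp [hi]) (by rintro rfl; exact ha hi)

lemma rows_good (L : ℕ) (φ : ℕ → Finset (ℕ × ℕ)) (h : ℕ → ℤ)
    (hpm : ∀ d < L, h d = 1 ∨ h d = -1)
    (hH : ∀ t ≤ L, ∑ d ∈ Finset.range t, (-1 : ℤ) ^ d * h d ≤ 1)
    (hd : ∀ d < L, ∀ d' < L, d ≠ d' → Disjoint (φ d) (φ d'))
    (h1 : ∀ d < L, Even d → GoodS (φ d))
    (h2 : ∀ g b, g < b → b < L → Even g → Odd b → GoodS (φ g ∪ φ b)) :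
    GoodS (((Finset.range L).filter (fun d => h d = -1)).biUnion φ) := by
  have key : ∀ t ≤ L, ∃ M U : Finset ℕ, M ∪ U = (Finset.range t).filter (fun d => h d = -1) ∧
      Disjoint M U ∧ GoodS (M.biUnion φ) ∧ (∀ u ∈ U, Even u) ∧
      2 * (U.card : ℤ) = (t % 2 : ℕ) - ∑ d ∈ Finset.range t, (-1 : ℤ) ^ d * h d := by
    intro t
    induction t with
    | zero => intro _; exact ⟨∅, ∅, by simp, by simp, by simpa using GoodS.empty, by simp, by simp⟩
    | succ t ih =>
      intro ht
      obtain ⟨M, U, hMU, hdis, hM, hU, hc⟩ := ih (by omega)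
      have hmem : ∀ z, z ∈ M ∨ z ∈ U ↔ z < t ∧ h z = -1 := by
        intro z
        rw [← Finset.mem_union, hMU]; simp
      have hb := hH (t + 1) ht
      rw [Finset.sum_range_succ] at hb
      rw [Finset.sum_range_succ, Finset.range_add_one, Finset.filter_insert]
      rcases hpm t (by omega) with e | e
      · refine ⟨M, U, ?_, hdis, hM, hU, ?_⟩
        · rw [hMU, if_neg (by rw [e]; norm_num)]
        · rcases Nat.even_or_odd t with p | p
          · rw [p.neg_one_pow, e]; rw [Nat.even_iff] at p; push_cast at *; omega
          · rw [p.neg_one_pow, e]; rw [Nat.odd_iff] at p; push_cast at *; omega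
      · rw [if_pos e]
        have htM : t ∉ M := fun hh => by have := (hmem t).1 (Or.inl hh); omega
        have htU : t ∉ U := fun hh => by have := (hmem t).1 (Or.inr hh); omega
        rcases Nat.even_or_odd t with p | p
        · refine ⟨M, insert t U, ?_, ?_, hM, ?_, ?_⟩
          · rw [Finset.union_insert, hMU]
          · rw [Finset.disjoint_insert_right]; exact ⟨htM, hdis⟩
          · intro u hu
            rcases Finset.mem_insert.1 hu with rfl | hu
            · exact p
            · exact hU u hu
          · rw [Finset.card_insert_of_notMem htU, p.neg_one_pow, e]
            rw [Nat.even_iff] at p; push_cast at *; omega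
        · have p' := p
          rw [p.neg_one_pow, e] at hb
          rw [Nat.odd_iff] at p'
          have hne : U.Nonempty := by
            rw [← Finset.card_pos]
            push_cast at *; omega
          obtain ⟨u, hu⟩ := hne
          have hut := (hmem u).1 (Or.inr hu)
          have huM : u ∉ M := fun hh => Finset.disjoint_left.1 hdis hh hu
          refine ⟨insert u (insert t M), U.erase u, ?_, ?_, ?_, ?_, ?_⟩
          · rw [← hMU]; ext z
            simp only [Finset.mem_union, Finset.mem_insert, Finset.mem_erase]
            by_cases hz : z = u
            · subst hz; simp [hu]
            · simp [hz]; tauto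
          · rw [Finset.disjoint_left]
            intro z hz hz'
            simp only [Finset.mem_insert, Finset.mem_erase] at hz hz'
            rcases hz with rfl | rfl | hz
            · exact hz'.1 rfl
            · exact htU hz'.2
            · exact Finset.disjoint_left.1 hdis hz hz'.2
          · rw [Finset.biUnion_insert, Finset.biUnion_insert, ← Finset.union_assoc]
            refine GoodS.union (h2 u t hut.1 (by omega) (hU u hu) p) hM ?_
            rw [Finset.disjoint_biUnion_right]
            intro i hi
            have him := (hmem i).1 (Or.inl hi)
            rw [Finset.disjoint_union_left]
            refine ⟨hd _ (by omega) _ (by omega) ?_, hd _ (by omega) _ (by omega) (by omega)⟩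
            rintro rfl; exact huM hi
          · intro z hz; exact hU z (Finset.mem_of_mem_erase hz)
          · have := Finset.card_erase_add_one hu
            rw [p.neg_one_pow, e]
            push_cast at *; omega
  obtain ⟨M, U, hMU, hdis, hM, hU, hc⟩ := key L le_rfl
  have hmem : ∀ z, z ∈ M ∨ z ∈ U ↔ z < L ∧ h z = -1 := by
    intro z
    rw [← Finset.mem_union, hMU]; simp
  rw [← hMU, Finset.union_biUnion]
  refine GoodS.union hM (good_biUnion U φ ?_ ?_) ?_
  · intro d hdU; exact h1 d ((hmem d).1 (Or.inr hdU)).1 (hU d hdU)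
  · intro d hdU d' hdU'
    exact hd d ((hmem d).1 (Or.inr hdU)).1 d' ((hmem d').1 (Or.inr hdU')).1
  · rw [Finset.disjoint_biUnion_left]
    intro i hi
    rw [Finset.disjoint_biUnion_right]
    intro j hj
    refine hd i ((hmem i).1 (Or.inl hi)).1 j ((hmem j).1 (Or.inr hj)).1 ?_
    rintro rfl; exact Finset.disjoint_left.1 hdis hi hj

def prs (m : ℕ) (c : ℕ → ℤ) : Finset (ℕ × ℕ) :=
  (Finset.range m ×ˢ Finset.range m).filter (fun q => q.1 < q.2 ∧ c q.1 ≠ c q.2)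

lemma mem_prs {m : ℕ} {c : ℕ → ℤ} {a b : ℕ} :
    (a, b) ∈ prs m c ↔ a < b ∧ b < m ∧ c a ≠ c b := by
  simp only [prs, Finset.mem_filter, Finset.mem_product, Finset.mem_range]
  constructor
  · rintro ⟨⟨_, h⟩, h1, h2⟩; exact ⟨h1, h, h2⟩
  · rintro ⟨h1, h, h2⟩; exact ⟨⟨by omega, h⟩, h1, h2⟩

def GW (c : ℕ → ℤ) (t : ℕ) : ℤ := ∑ i ∈ Finset.range t, (-1 : ℤ) ^ i * c i

lemma GW_succ (c : ℕ → ℤ) (t : ℕ) : GW c (t + 1) = GW c t + (-1 : ℤ) ^ t * c t := by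
  simp [GW, Finset.sum_range_succ]

/-- outward sum to the right -/
lemma sum_right (c : ℕ → ℤ) (κ : ℤ) (p t : ℕ) :
    ∑ d ∈ Finset.range t, (-1 : ℤ) ^ d * (κ * c (p + d))
      = κ * (-1) ^ p * (GW c (p + t) - GW c p) := by
  induction t with
  | zero => simp
  | succ t ih =>
    rw [Finset.sum_range_succ, ih, ← add_assoc, GW_succ, pow_add]
    have : ((-1 : ℤ) ^ p) * (-1) ^ p = 1 := by rw [← mul_pow]; simp
    linear_combination (-κ * (-1) ^ t * c (p + t)) * this

/-- outward sum to the left -/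
lemma sum_left (c : ℕ → ℤ) (κ : ℤ) (p t : ℕ) (h : t ≤ p) :
    ∑ d ∈ Finset.range t, (-1 : ℤ) ^ d * (κ * c (p - 1 - d))
      = - κ * (-1) ^ p * (GW c p - GW c (p - t)) := by
  induction t with
  | zero => simp
  | succ t ih =>
    rw [Finset.sum_range_succ, ih (by omega)]
    obtain ⟨q, rfl⟩ : ∃ q, p = q + t + 1 := ⟨p - t - 1, by omega⟩
    have e1 : q + t + 1 - t = q + 1 := by omega
    have e2 : q + t + 1 - (t + 1) = q := by omega
    have e3 : q + t + 1 - 1 - t = q := by omega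
    rw [e1, e2, e3, GW_succ c q, pow_add, pow_add]
    have : ((-1 : ℤ) ^ q) * (-1) ^ q = 1 := by rw [← mul_pow]; simp
    linear_combination (-κ * (-1) ^ t * c q) * this

lemma pm_ne {x y : ℤ} (hx : x = 1 ∨ x = -1) (hy : y = 1 ∨ y = -1) : x * y = -1 ↔ x ≠ y := by
  rcases hx with rfl | rfl <;> rcases hy with rfl | rfl <;> norm_num

lemma pm_mul {x y : ℤ} (hx : x = 1 ∨ x = -1) (hy : y = 1 ∨ y = -1) :
    x * y = 1 ∨ x * y = -1 := by
  rcases hx with rfl | rfl <;> rcases hy with rfl | rfl <;> norm_num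

lemma case_first (m : ℕ) (c : ℕ → ℤ) (hc : ∀ i, c i = 1 ∨ c i = -1)
    (ih : GoodS (prs m (fun i => c (i + 1))))
    (hmax : ∀ t ≤ m + 1, GW c t ≤ GW c 0) : GoodS (prs (m + 1) c) := by
  have h0 : c 0 = -1 := by
    have := hmax 1 (by omega)
    simp [GW] at this
    rcases hc 0 with h | h <;> omega
  have hr := rows_good m (fun d => {(0, 1 + d)}) (fun d => c 0 * c (1 + d))
    (fun d _ => pm_mul (hc _) (hc _))
    (by
      intro t ht
      rw [sum_right, h0]
      have a := hmax (1 + t) (by omega)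
      have b := GW_succ c 0
      simp [h0] at b
      rw [b]; linarith)
    (by intro d _ d' _ hne; simp; omega)
    (by
      intro d _ he
      exact GoodS.of_blk (Or.inl ⟨0, 1 + d, by rw [Nat.odd_iff]; rw [Nat.even_iff] at he; omega, rfl⟩))
    (by
      intro g b hgb _ hg hb
      rw [Nat.even_iff] at hg; rw [Nat.odd_iff] at hb
      refine GoodS.of_blk (Or.inr (Or.inr (Or.inl ⟨0, 1 + g, 1 + b, by omega, ?_, ?_, rfl⟩)))
      · rw [Nat.odd_iff]; omega
      · rw [Nat.even_iff]; omega)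
  have hi := ih.map (fun i => i + 1) (fun a b h => by simpa using h)
    (fun a b => by simp only [Nat.even_iff]; omega)
  have hu := GoodS.union hi hr (by
    rw [Finset.disjoint_left]
    rintro ⟨a, b⟩ h1 h2
    simp at h1 h2
    omega)
  convert hu using 1
  ext ⟨a, b⟩
  simp only [Finset.mem_union, Finset.mem_image, Finset.mem_biUnion, Finset.mem_filter,
    Finset.mem_range, Finset.mem_singleton, Prod.exists, mem_prs, Prod.mk.injEq, pm_ne (hc _) (hc _)]
  constructor
  · rintro ⟨h1, h2, h3⟩
    by_cases ha : a = 0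
    · subst ha
      right
      refine ⟨b - 1, ⟨by omega, ?_⟩, rfl, by omega⟩
      rwa [show 1 + (b - 1) = b by omega]
    · left
      refine ⟨a - 1, b - 1, ⟨by omega, by omega, ?_⟩, by omega, by omega⟩
      rwa [show a - 1 + 1 = a by omega, show b - 1 + 1 = b by omega]
  · rintro (⟨a', b', ⟨h1, h2, h3⟩, rfl, rfl⟩ | ⟨d, ⟨h1, h2⟩, rfl, rfl⟩)
    · exact ⟨by omega, by omega, h3⟩
    · exact ⟨by omega, by omega, h2⟩

lemma case_last (m : ℕ) (c : ℕ → ℤ) (hc : ∀ i, c i = 1 ∨ c i = -1)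
    (ih : GoodS (prs m c))
    (hmax : ∀ t ≤ m + 1, GW c t ≤ GW c (m + 1)) : GoodS (prs (m + 1) c) := by
  have hs := GW_succ c m
  have h0 : (-1 : ℤ) ^ m * c m = 1 := by
    have := hmax m (by omega)
    rcases pm_mul (neg_one_pow_eq_or ℤ m) (hc m) with h | h <;> omega
  have hr := rows_good m (fun d => {(m - 1 - d, m)}) (fun d => c m * c (m - 1 - d))
    (fun d _ => pm_mul (hc _) (hc _))
    (by
      intro t ht
      rw [sum_left _ _ _ _ ht]
      have a := hmax (m - t) (by omega)
      rw [neg_mul, mul_comm (c m), h0]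
      linarith)
    (by intro d _ d' _ hne; simp; omega)
    (by
      intro d _ he
      refine GoodS.of_blk (Or.inl ⟨m - 1 - d, m, ?_, rfl⟩)
      rw [Nat.odd_iff]; rw [Nat.even_iff] at he; omega)
    (by
      intro g b hgb _ hg hb
      rw [Nat.even_iff] at hg; rw [Nat.odd_iff] at hb
      refine GoodS.of_blk (Or.inr (Or.inl ⟨m - 1 - g, m - 1 - b, m, by omega, ?_, ?_, rfl⟩))
      · rw [Nat.odd_iff]; omega
      · rw [Nat.even_iff]; omega)
  have hu := GoodS.union ih hr (by
    rw [Finset.disjoint_left]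
    rintro ⟨a, b⟩ h1 h2
    simp [mem_prs] at h1 h2
    omega)
  convert hu using 1
  ext ⟨a, b⟩
  simp only [Finset.mem_union, Finset.mem_biUnion, Finset.mem_filter,
    Finset.mem_range, Finset.mem_singleton, mem_prs, Prod.mk.injEq, pm_ne (hc _) (hc _)]
  constructor
  · rintro ⟨h1, h2, h3⟩
    by_cases hb : b = m
    · subst hb
      right
      refine ⟨b - 1 - a, ⟨by omega, ?_⟩, by omega, rfl⟩
      rw [show b - 1 - (b - 1 - a) = a by omega]; exact h3.symm
    · left
      exact ⟨h1, by omega, h3⟩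
  · rintro (⟨h1, h2, h3⟩ | ⟨d, ⟨h1, h2⟩, rfl, rfl⟩)
    · exact ⟨h1, by omega, h3⟩
    · exact ⟨by omega, by omega, h2.symm⟩

lemma case_mid (m k : ℕ) (hk : k ≤ m) (c : ℕ → ℤ) (hc : ∀ i, c i = 1 ∨ c i = -1)
    (ih : GoodS (prs m (fun i => c (if i < k then i else i + 2))))
    (hmax : ∀ t ≤ m + 2, GW c t ≤ GW c (k + 1)) : GoodS (prs (m + 2) c) := by
  have hs := GW_succ c k
  have hs' := GW_succ c (k + 1)
  have h0 : (-1 : ℤ) ^ k * c k = 1 := by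
    have := hmax k (by omega)
    rcases pm_mul (neg_one_pow_eq_or ℤ k) (hc k) with h | h <;> omega
  have h1 : (-1 : ℤ) ^ (k + 1) * c (k + 1) = -1 := by
    have := hmax (k + 2) (by omega)
    rcases pm_mul (neg_one_pow_eq_or ℤ (k + 1)) (hc (k + 1)) with h | h
    · rw [show k + 2 = k + 1 + 1 from rfl] at this; omega
    · exact h
  have hkk : c (k + 1) = c k := by
    rw [pow_succ] at h1
    rcases neg_one_pow_eq_or ℤ k with h | h <;> rw [h] at h0 h1 <;> linarith
  have hR := rows_good (m - k) (fun d => {(k + 1, k + 2 + d), (k, k + 2 + d)})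
    (fun d => c k * c (k + 2 + d))
    (fun d _ => pm_mul (hc _) (hc _))
    (by
      intro t ht
      rw [sum_right]
      have a := hmax (k + 2 + t) (by omega)
      rw [show k + 2 = k + 1 + 1 from rfl] at a ⊢
      have e : c k * (-1) ^ (k + 1 + 1) = 1 := by rw [pow_succ, pow_succ]; linarith
      rw [e]
      linarith)
    (by intro d _ d' _ hne; simp; omega)
    (by
      intro d _ he
      rw [Nat.even_iff] at he
      refine GoodS.of_blk (Or.inr (Or.inl ⟨k + 1, k, k + 2 + d, by omega, ?_, ?_, rfl⟩))
      · rw [Nat.odd_iff]; omega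
      · rw [Nat.even_iff]; omega)
    (by
      intro g b hgb _ hg hb
      rw [Nat.even_iff] at hg; rw [Nat.odd_iff] at hb
      refine GoodS.of_blk (Or.inr (Or.inr (Or.inr
        ⟨k + 1, k, k + 2 + g, k + 2 + b, by omega, by omega, ?_, ?_, ?_, ?_⟩)))
      · rw [Nat.odd_iff]; omega
      · rw [Nat.even_iff]; omega
      · rw [Nat.even_iff]; omega
      · ext z; simp; tauto)
  have hL := rows_good k (fun d => {(k - 1 - d, k), (k - 1 - d, k + 1)})
    (fun d => c k * c (k - 1 - d))
    (fun d _ => pm_mul (hc _) (hc _))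
    (by
      intro t ht
      rw [sum_left _ _ _ _ ht]
      have a := hmax (k - t) (by omega)
      rw [neg_mul, mul_comm (c k), h0]
      linarith)
    (by intro d _ d' _ hne; simp; omega)
    (by
      intro d _ he
      rw [Nat.even_iff] at he
      refine GoodS.of_blk (Or.inr (Or.inr (Or.inl ⟨k - 1 - d, k, k + 1, by omega, ?_, ?_, rfl⟩)))
      · rw [Nat.odd_iff]; omega
      · rw [Nat.even_iff]; omega)
    (by
      intro g b hgb _ hg hb
      rw [Nat.even_iff] at hg; rw [Nat.odd_iff] at hb
      refine GoodS.of_blk (Or.inr (Or.inr (Or.inr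
        ⟨k - 1 - g, k - 1 - b, k, k + 1, by omega, by omega, ?_, ?_, ?_, ?_⟩)))
      · rw [Nat.odd_iff]; omega
      · rw [Nat.even_iff]; omega
      · rw [Nat.even_iff]; omega
      · ext z; simp; tauto)
  have hi := ih.map (fun i => if i < k then i else i + 2)
    (fun a b h => by dsimp only; split_ifs <;> omega)
    (fun a b => by simp only [Nat.even_iff]; split_ifs <;> omega)
  have hRL := GoodS.union hR hL (by
    rw [Finset.disjoint_left]
    rintro ⟨a, b⟩ h1 h2
    simp at h1 h2
    omega)
  have hu := GoodS.union hi hRL (by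
    rw [Finset.disjoint_left]
    rintro ⟨a, b⟩ h1 h2
    simp only [Finset.mem_union, Finset.mem_image, Finset.mem_biUnion, Finset.mem_filter,
      Finset.mem_range, Finset.mem_singleton, Finset.mem_insert, Prod.exists, Prod.mk.injEq] at h1 h2
    obtain ⟨a', b', _, h3, h4⟩ := h1
    split_ifs at h3 h4 <;> omega)
  convert hu using 1
  ext ⟨a, b⟩
  simp only [Finset.mem_union, Finset.mem_image, Finset.mem_biUnion, Finset.mem_filter,
    Finset.mem_range, Finset.mem_singleton, Finset.mem_insert, Prod.exists, mem_prs,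
    Prod.mk.injEq, pm_ne (hc _) (hc _)]
  constructor
  · rintro ⟨h1, h2, h3⟩
    by_cases ha : a = k ∨ a = k + 1
    · have hca : c a = c k := by rcases ha with rfl | rfl <;> simp [hkk]
      have hb : b ≠ k + 1 := by
        rintro rfl
        exact h3 (by rw [hca, hkk])
      right; left
      refine ⟨b - (k + 2), ⟨by omega, ?_⟩, by omega⟩
      rw [show k + 2 + (b - (k + 2)) = b by omega, ← hca]; exact h3
    · by_cases hb : b = k ∨ b = k + 1
      · have hcb : c b = c k := by rcases hb with rfl | rfl <;> simp [hkk]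
        right; right
        refine ⟨k - 1 - a, ⟨by omega, ?_⟩, by omega⟩
        rw [show k - 1 - (k - 1 - a) = a by omega, ← hcb]; exact h3.symm
      · left
        have key : ∀ z, ¬ (z = k ∨ z = k + 1) →
            (if (if z < k then z else z - 2) < k then (if z < k then z else z - 2)
              else (if z < k then z else z - 2) + 2) = z := by
          intro z hz; split_ifs <;> omega
        refine ⟨if a < k then a else a - 2, if b < k then b else b - 2,
          ⟨by split_ifs <;> omega, by split_ifs <;> omega, ?_⟩, key a ha, key b hb⟩
        rw [key a ha, key b hb]; exact h3
  · rintro (⟨a', b', ⟨h1, h2, h3⟩, rfl, rfl⟩ | ⟨d, ⟨h1, h2⟩, h3⟩ | ⟨d, ⟨h1, h2⟩, h3⟩)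
    · exact ⟨by split_ifs <;> omega, by split_ifs <;> omega, h3⟩
    · rcases h3 with ⟨rfl, rfl⟩ | ⟨rfl, rfl⟩
      · exact ⟨by omega, by omega, by rw [hkk]; exact h2⟩
      · exact ⟨by omega, by omega, h2⟩
    · rcases h3 with ⟨rfl, rfl⟩ | ⟨rfl, rfl⟩
      · exact ⟨by omega, by omega, h2.symm⟩
      · exact ⟨by omega, by omega, by rw [hkk]; exact h2.symm⟩

lemma prs_good (m : ℕ) : ∀ c : ℕ → ℤ, (∀ i, c i = 1 ∨ c i = -1) → GoodS (prs m c) := by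
  induction m using Nat.strong_induction_on with
  | _ m ih =>
    intro c hc
    rcases Nat.eq_zero_or_pos m with rfl | hm
    · have : prs 0 c = ∅ := by simp [prs]
      rw [this]; exact GoodS.empty
    obtain ⟨t, ht, hmax⟩ := Finset.exists_max_image (Finset.range (m + 1)) (GW c) ⟨0, by simp⟩
    have hmax' : ∀ s ≤ m, GW c s ≤ GW c t := fun s hs => hmax s (by simp; omega)
    have ht' : t ≤ m := by simp at ht; omega
    by_cases h0 : t = 0
    · subst h0
      obtain ⟨m, rfl⟩ : ∃ q, m = q + 1 := ⟨m - 1, by omega⟩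
      exact case_first m c hc (ih m (by omega) _ (fun i => hc _)) hmax'
    by_cases h1 : t = m
    · subst h1
      obtain ⟨m, rfl⟩ : ∃ q, t = q + 1 := ⟨t - 1, by omega⟩
      exact case_last m c hc (ih m (by omega) _ hc) hmax'
    obtain ⟨k, rfl⟩ : ∃ q, t = q + 1 := ⟨t - 1, by omega⟩
    obtain ⟨m, rfl⟩ : ∃ q, m = q + 2 := ⟨m - 2, by omega⟩
    exact case_mid m k (by omega) c hc (ih m (by omega) _ (fun i => hc _)) hmax'

lemma good_partition (n : ℕ) (x : ℕ → ℝ) (c : ℕ → ℤ)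
    (hs : ∀ a b, (a, b) ∈ prs (n + 1) c →
      (Odd (a + b) → psign x (a + 1) b = 1) ∧ (Even (a + b) → psign x (a + 1) b = -1))
    (s : Finset (ℕ × ℕ)) (h : GoodS s) (hsub : s ⊆ prs (n + 1) c) :
    ∃ π : Finset (Finset (ℕ × ℕ)),
      (∀ p ∈ π, p.Nonempty) ∧
      (π : Set (Finset (ℕ × ℕ))).PairwiseDisjoint id ∧
      π.biUnion id = s.image (fun q => (q.1 + 1, q.2)) ∧
      (∀ p ∈ π, IsType1 x p ∨ IsType2 x p ∨ IsType3 x p) := by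
  induction h with
  | empty => exact ⟨∅, by simp, by simp, by simp, by simp⟩
  | add s t hgs ht hd ih =>
    obtain ⟨π, p1, p2, p3, p4⟩ := ih (Finset.union_subset_left hsub)
    have htsub := Finset.union_subset_right hsub
    refine ⟨insert (t.image (fun q => (q.1 + 1, q.2))) π, ?_, ?_, ?_, ?_⟩
    · intro p hp
      rcases Finset.mem_insert.1 hp with rfl | hp
      · rw [Finset.image_nonempty]
        rcases ht with ⟨a, b, h1, rfl⟩ | ⟨a, a', b, h1, h2, h3, rfl⟩ | ⟨a, b, b', h1, h2, h3, rfl⟩ |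
          ⟨a, a', b, b', h1, h2, h3, h4, h5, rfl⟩ <;> exact ⟨(a, b), by simp⟩
      · exact p1 p hp
    · rw [Finset.coe_insert, Set.pairwiseDisjoint_insert]
      refine ⟨p2, ?_⟩
      intro p hp _
      have hps : p ⊆ s.image (fun q => (q.1 + 1, q.2)) := by
        rw [← p3]; exact Finset.subset_biUnion_of_mem id hp
      refine Finset.disjoint_of_subset_right hps ?_
      simp only [id]
      rw [Finset.disjoint_image]
      · exact hd.symm
      · rintro ⟨a, b⟩ ⟨a', b'⟩ hq
        simpa using hq
    · rw [Finset.biUnion_insert, p3, Finset.image_union, Finset.union_comm]; rfl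
    · intro p hp
      rcases Finset.mem_insert.1 hp with rfl | hp
      · rcases ht with ⟨a, b, h1, rfl⟩ | ⟨a, a', b, h1, h2, h3, rfl⟩ |
          ⟨a, b, b', h1, h2, h3, rfl⟩ | ⟨a, a', b, b', h1, h2, h3, h4, h5, rfl⟩
        · exact Or.inl ⟨a + 1, b, by simp, (hs a b (htsub (by simp))).1 h1⟩
        · exact Or.inr (Or.inl ⟨a + 1, b, a' + 1, b, by simp [Finset.image_insert],
            (hs a b (htsub (by simp))).1 h2, (hs a' b (htsub (by simp))).2 h3,
            Or.inl ⟨by omega, rfl⟩⟩)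
        · exact Or.inr (Or.inl ⟨a + 1, b, a + 1, b', by simp [Finset.image_insert],
            (hs a b (htsub (by simp))).1 h2, (hs a b' (htsub (by simp))).2 h3,
            Or.inr ⟨rfl, by omega⟩⟩)
        · have e1 : a + 1 - (a - a') = a' + 1 := by omega
          have e2 : b + (b' - b) = b' := by omega
          refine Or.inr (Or.inr ⟨a + 1, b, a - a', b' - b, by omega, by omega, ?_, ?_⟩)
          · rw [e1, e2]; simp [Finset.image_insert]
          · rw [e1, e2]
            refine ⟨(hs a b (htsub (by simp))).1 h3, (hs a' b' (htsub (by simp))).1 ?_,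
              (hs a' b (htsub (by simp))).2 h4, (hs a b' (htsub (by simp))).2 h5⟩
            rw [Nat.odd_iff] at *; rw [Nat.even_iff] at *; omega
      · exact p4 p hp

theorem Jv_has_good_partition (n : ℕ) (x : ℕ → ℝ)
    (hx : ∀ i ∈ Finset.Icc 1 n, x i ∈ Set.Icc (-1 : ℝ) 1 ∧ x i ≠ 0) :
    ∃ π : Finset (Finset (ℕ × ℕ)),
      (∀ p ∈ π, p.Nonempty) ∧
      (π : Set (Finset (ℕ × ℕ))).PairwiseDisjoint id ∧
      π.biUnion id = Jv n x ∧
      (∀ p ∈ π, IsType1 x p ∨ IsType2 x p ∨ IsType3 x p) := by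
  classical
  have hP : ∀ t ≤ n, psign x 1 t = 1 ∨ psign x 1 t = -1 := by
    intro t
    induction t with
    | zero => intro _; left; simp [psign]
    | succ t ih =>
      intro ht
      have e : psign x 1 (t + 1) = psign x 1 t * Real.sign (x (t + 1)) := by
        unfold psign; rw [Finset.prod_Icc_succ_top (by omega)]
      have hne := (hx (t + 1) (by simp; omega)).2
      rw [e]
      rcases ih (by omega) with h | h <;> rcases Real.sign_apply_eq_of_ne_zero _ hne with h' | h' <;>
        rw [h, h'] <;> norm_num
  have hmul : ∀ a b, a ≤ b → psign x 1 b = psign x 1 a * psign x (a + 1) b := by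
    intro a b hab
    unfold psign
    rw [← Finset.prod_union]
    · congr 1; ext z; simp; omega
    · rw [Finset.disjoint_left]; intro z; simp; omega
  let c : ℕ → ℤ := fun t => if psign x 1 t = 1 then (-1) ^ t else -(-1) ^ t
  have hc : ∀ i, c i = 1 ∨ c i = -1 := by
    intro i
    simp only [c]
    rcases neg_one_pow_eq_or ℤ i with h | h <;> rw [h] <;> split_ifs <;> norm_num
  have hcR : ∀ t ≤ n, (c t : ℝ) = (-1) ^ t * psign x 1 t := by
    intro t ht
    rcases hP t ht with h | h
    · simp [c, h]
    · simp only [c, h]; norm_num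
  have hiff : ∀ a b, a < b → b ≤ n → (c a ≠ c b ↔ psign x (a + 1) b = (-1 : ℝ) ^ (a + 1 + b)) := by
    intro a b hab hb
    have h1 := hmul a b hab.le
    have h2 := hcR a (by omega)
    have h3 := hcR b hb
    have h4 : c a ≠ c b ↔ (c a : ℝ) ≠ (c b : ℝ) := by norm_cast
    rw [h4, h2, h3, h1, pow_add, pow_add]
    have h5 := hP b hb
    have h6 : psign x (a + 1) b = 1 ∨ psign x (a + 1) b = -1 := by
      rw [h1] at h5
      rcases hP a (by omega) with h | h <;> rw [h] at h5 <;> rcases h5 with h5 | h5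
      · left; linarith
      · right; linarith
      · right; linarith
      · left; linarith
    rcases hP a (by omega) with h | h <;> rcases h6 with h6 | h6 <;>
      rcases neg_one_pow_eq_or ℝ a with ha | ha <;> rcases neg_one_pow_eq_or ℝ b with hb | hb <;>
      rw [h, h6, ha, hb] <;> norm_num
  obtain ⟨π, p1, p2, p3, p4⟩ := good_partition n x c (by
    intro a b hab
    rw [mem_prs] at hab
    have := (hiff a b hab.1 (by omega)).1 hab.2.2
    rw [this]
    constructor
    · intro h; apply Even.neg_one_pow; rw [Nat.even_iff]; rw [Nat.odd_iff] at h; omega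
    · intro h; apply Odd.neg_one_pow; rw [Nat.odd_iff]; rw [Nat.even_iff] at h; omega)
    (prs (n + 1) c) (prs_good _ c hc) (Finset.Subset.refl _)
  refine ⟨π, p1, p2, ?_, p4⟩
  rw [p3]
  ext ⟨i, j⟩
  simp only [Jv, Finset.mem_image, Finset.mem_filter, Finset.mem_product, Finset.mem_Icc,
    Prod.exists, mem_prs, Prod.mk.injEq]
  constructor
  · rintro ⟨a, b, ⟨h1, h2, h3⟩, rfl, rfl⟩
    exact ⟨by omega, by omega, (hiff a b h1 (by omega)).1 h3⟩
  · rintro ⟨h1, h2, h3⟩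
    refine ⟨i - 1, j, ⟨by omega, by omega, ?_⟩, by omega, rfl⟩
    rw [hiff _ _ (by omega) (by omega), show i - 1 + 1 = i by omega]
    exact h3
end
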